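/- Let f : ℝ^n → [0,∞) be a measurable function that is bounded and integrable. For (θ,t) ∈ S^{n-1} × ℝ let ‖f‖_{θ,t} denote the essential supremum of y ↦ f(tθ + y) over θ^⊥ with respect to its Lebesgue measure. Then ∫_{S^{n-1}} ∫_ℝ ( Rf(θ,t) )^{n+1} / ‖f‖_{θ,t} dt d*θ ≤ ( b_{n-1}^{n+1} · b_{n²} / ( b_n^{n} · b_{n²−1} ) ) · ( ∫_{ℝ^n} f(x) dx )^{n}, with the convention that the integrand is 0 whenever ‖f‖_{θ,t} = 0. (Case k = n−1 of the Dann–Paouris–Pivovarov inequality for the k-plane transform.) -/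

import Mathlib

open MeasureTheory Metric Real
open scoped ENNReal NNReal

noncomputable section

/-- The normalized (probability) surface measure `d*θ` on the unit sphere of
`EuclideanSpace ℝ (Fin n)`. -/
def sphMeasure (n : ℕ) : Measure (sphere (0 : EuclideanSpace ℝ (Fin n)) 1) :=
  ((volume : Measure (EuclideanSpace ℝ (Fin n))).toSphere Set.univ)⁻¹ •
    (volume : Measure (EuclideanSpace ℝ (Fin n))).toSphere

/-- The hyperplane Radon transform: `Rf(θ,t) = ∫_{θ^⊥} f(tθ + y) dy`, where `θ^⊥` carries its
canonical Lebesgue measure as an (n-1)-dimensional inner product space. -/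
def Radon (n : ℕ) (f : EuclideanSpace ℝ (Fin n) → ℝ≥0∞)
    (θ : sphere (0 : EuclideanSpace ℝ (Fin n)) 1) (t : ℝ) : ℝ≥0∞ :=
  ∫⁻ y : ((ℝ ∙ (θ : EuclideanSpace ℝ (Fin n)))ᗮ),
    f (t • (θ : EuclideanSpace ℝ (Fin n)) + (y : EuclideanSpace ℝ (Fin n)))

/-- `b_m = π^{m/2}/Γ(m/2+1)`, the volume of the m-dimensional unit ball. -/
def ballVol (m : ℕ) : ℝ := Real.pi ^ ((m : ℝ) / 2) / Real.Gamma ((m : ℝ) / 2 + 1)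

/-- Euclidean space. -/
abbrev EE (k : ℕ) := EuclideanSpace ℝ (Fin k)

/-- Prepend a coordinate. -/
def econs {k : ℕ} (h : ℝ) (z : EE k) : EE (k + 1) :=
  WithLp.toLp 2 (Fin.cons h (fun i => z i) : Fin (k + 1) → ℝ)

@[simp] lemma econs_zero {k : ℕ} (h : ℝ) (z : EE k) : econs h z 0 = h := rfl
@[simp] lemma econs_succ {k : ℕ} (h : ℝ) (z : EE k) (i : Fin k) : econs h z i.succ = z i := rfl

/-- The tail. -/
def etail {k : ℕ} (x : EE (k + 1)) : EE k := WithLp.toLp 2 (fun i => x i.succ)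

@[simp] lemma etail_apply {k : ℕ} (x : EE (k + 1)) (i : Fin k) : etail x i = x i.succ := rfl

@[simp] lemma etail_econs {k : ℕ} (h : ℝ) (z : EE k) : etail (econs h z) = z := by
  ext i; simp

lemma econs_etail {k : ℕ} (x : EE (k + 1)) : econs (x 0) (etail x) = x := by
  ext i; refine Fin.cases ?_ (fun i => ?_) i <;> simp

lemma econs_add {k : ℕ} (h hb : ℝ) (z zb : EE k) :
    econs (h + hb) (z + zb) = econs h z + econs hb zb := by
  ext i; refine Fin.cases ?_ (fun i => ?_) i <;> simp

lemma econs_smul {k : ℕ} (c h : ℝ) (z : EE k) :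
    econs (c * h) (c • z) = c • econs h z := by
  ext i; refine Fin.cases ?_ (fun i => ?_) i <;> simp

lemma norm_sq_econs {k : ℕ} (h : ℝ) (z : EE k) : ‖econs h z‖ ^ 2 = h ^ 2 + ‖z‖ ^ 2 := by
  simp [EuclideanSpace.norm_sq_eq, Fin.sum_univ_succ]

lemma inner_econs {k : ℕ} (h hb : ℝ) (z zb : EE k) :
    inner ℝ (econs h z) (econs hb zb) = h * hb + inner ℝ z zb := by
  simp [PiLp.inner_apply, Fin.sum_univ_succ, mul_comm]

/-- The measurable equivalence. -/
def econsEquiv (k : ℕ) : ℝ × EE k ≃ᵐ EE (k + 1) :=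
  ((MeasurableEquiv.refl ℝ).prodCongr (MeasurableEquiv.toLp 2 (Fin k → ℝ)).symm).trans
    ((MeasurableEquiv.piFinSuccAbove (fun _ : Fin (k + 1) => ℝ) 0).symm.trans
      (MeasurableEquiv.toLp 2 (Fin (k + 1) → ℝ)))

lemma econsEquiv_apply {k : ℕ} (p : ℝ × EE k) : econsEquiv k p = econs p.1 p.2 := by
  ext i
  refine Fin.cases ?_ (fun i => ?_) i <;> 
  simp [econsEquiv, MeasurableEquiv.piFinSuccAbove, econs] <;> rfl

lemma measurePreserving_econsEquiv (k : ℕ) : MeasurePreserving (econsEquiv k) := by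
  unfold econsEquiv
  refine MeasurePreserving.trans (μb := volume) ?_ (MeasurePreserving.trans (μb := volume) ?_ ?_)
  · exact (MeasurePreserving.id volume).prod (PiLp.volume_preserving_ofLp (Fin k))
  · exact (volume_preserving_piFinSuccAbove (fun _ : Fin (k + 1) => ℝ) 0).symm
  · exact PiLp.volume_preserving_toLp (Fin (k + 1))

@[fun_prop] lemma measurable_econs {α : Type*} [MeasurableSpace α] {k : ℕ} {u : α → ℝ} {v : α → EE k}
    (hu : Measurable u) (hv : Measurable v) : Measurable (fun a => econs (u a) (v a)) := by
  have := (econsEquiv k).measurable.comp (hu.prodMk hv)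
  simpa [Function.comp_def, econsEquiv_apply] using this

lemma continuous_etail {k : ℕ} : Continuous (etail : EE (k + 1) → EE k) := by
  unfold etail
  fun_prop

@[fun_prop] lemma measurable_etail {k : ℕ} : Measurable (etail : EE (k + 1) → EE k) :=
  continuous_etail.measurable

lemma lintegral_econs {k : ℕ} {F : EE (k + 1) → ℝ≥0∞} (hF : Measurable F) :
    ∫⁻ x, F x = ∫⁻ h, ∫⁻ z, F (econs h z) := by
  rw [← (measurePreserving_econsEquiv k).lintegral_comp_emb (econsEquiv k).measurableEmbedding,
    Measure.volume_eq_prod, lintegral_prod]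
  · simp only [econsEquiv_apply]
  · exact (hF.comp (econsEquiv k).measurable).aemeasurable

lemma lintegral_econs' {k : ℕ} {F : EE (k + 1) → ℝ≥0∞} (hF : Measurable F) :
    ∫⁻ x, F x = ∫⁻ z, ∫⁻ h, F (econs h z) := by
  rw [lintegral_econs hF, lintegral_lintegral_swap]
  refine Measurable.aemeasurable ?_
  exact hF.comp (by fun_prop)

/-- Splitting a pi type over `Fin (N+1)`. -/
lemma lintegral_pi_succ {N : ℕ} {α : Type*} [MeasureSpace α] [SigmaFinite (volume : Measure α)]
    {F : (Fin (N + 1) → α) → ℝ≥0∞} (hF : Measurable F) :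
    ∫⁻ x, F x = ∫⁻ a, ∫⁻ x : Fin N → α, F (Fin.cons a x) := by
  have e := (volume_preserving_piFinSuccAbove (fun _ : Fin (N + 1) => α) 0).symm
  rw [← e.lintegral_comp_emb (MeasurableEquiv.measurableEmbedding _),
    Measure.volume_eq_prod, lintegral_prod]
  · simp [MeasurableEquiv.piFinSuccAbove]
    rfl
  · exact (hF.comp (MeasurableEquiv.measurable _)).aemeasurable

@[fun_prop] lemma measurable_fin_cons {N : ℕ} {α β : Type*} [MeasurableSpace α] [MeasurableSpace β]
    {u : β → α} {v : β → Fin N → α} (hu : Measurable u) (hv : Measurable v) :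
    Measurable (fun b => (Fin.cons (u b) (v b) : Fin (N + 1) → α)) := by
  rw [measurable_pi_iff]
  intro i
  refine Fin.cases ?_ (fun i => ?_) i
  · simpa using hu
  · simpa using (measurable_pi_iff.1 hv i)

lemma lintegral_pi_prod {N : ℕ} {α : Type*} [MeasureSpace α] [SigmaFinite (volume : Measure α)]
    (g : Fin N → α → ℝ≥0∞) (hg : ∀ i, Measurable (g i)) :
    ∫⁻ x : Fin N → α, ∏ i, g i (x i) = ∏ i, ∫⁻ a, g i a := by
  induction N with
  | zero => simp [volume_pi]
  | succ N ih =>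
    rw [lintegral_pi_succ (by fun_prop)]
    simp only [Fin.prod_univ_succ, Fin.cons_zero, Fin.cons_succ]
    have : ∀ a, ∫⁻ x : Fin N → α, g 0 a * ∏ i, g i.succ (x i) =
        g 0 a * ∏ i : Fin N, ∫⁻ a, g i.succ a := by
      intro a
      rw [lintegral_const_mul _ (by fun_prop), ih _ (fun i => hg _)]
    simp_rw [this]
    rw [lintegral_mul_const _ (hg 0)]

/-- Splitting a family of points into heights and tails. -/
lemma lintegral_pi_econs {N k : ℕ} {F : (Fin N → EE (k + 1)) → ℝ≥0∞} (hF : Measurable F) :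
    ∫⁻ Y, F Y = ∫⁻ z : Fin N → EE k, ∫⁻ h : Fin N → ℝ, F (fun i => econs (h i) (z i)) := by
  have e1 : MeasurePreserving (fun (Y : Fin N → ℝ × EE k) i => econsEquiv k (Y i)) := 
    measurePreserving_pi (fun _ => volume) (fun _ => volume) (fun _ => measurePreserving_econsEquiv k)
  have e2 := (volume_measurePreserving_arrowProdEquivProdArrow ℝ (EE k) (Fin N)).symm
  rw [← e1.map_eq, lintegral_map hF e1.measurable,
    ← e2.lintegral_comp_emb (MeasurableEquiv.measurableEmbedding _),
    Measure.volume_eq_prod, lintegral_prod_symm]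
  · simp only [econsEquiv_apply]
    rfl
  · exact ((hF.comp e1.measurable).comp (MeasurableEquiv.measurable _)).aemeasurable

/-- Indicator of the centered open interval of length `m`. -/
def box (m : ℝ≥0∞) (h : ℝ) : ℝ≥0∞ := if |h| < m.toReal / 2 then 1 else 0

lemma measurable_box : Measurable (fun p : ℝ≥0∞ × ℝ => box p.1 p.2) := by
  unfold box
  refine Measurable.ite ?_ measurable_const measurable_const
  exact measurableSet_lt (by fun_prop) (by fun_prop)

@[fun_prop] lemma measurable_box' {α : Type*} [MeasurableSpace α] {u : α → ℝ≥0∞} {v : α → ℝ}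
    (hu : Measurable u) (hv : Measurable v) : Measurable (fun a => box (u a) (v a)) :=
  measurable_box.comp (hu.prodMk hv)

lemma box_le_one (m : ℝ≥0∞) (h : ℝ) : box m h ≤ 1 := by
  unfold box; split_ifs <;> simp

lemma box_neg (m : ℝ≥0∞) (h : ℝ) : box m (-h) = box m h := by simp [box]

lemma chord_real (a β p q h s : ℝ) (hpq : p < q) (hs0 : 0 ≤ s) (hs1 : s ≤ 1) :
    (s - (if h ∈ Set.Ioo p q then 1 else 0)) * ((q - h) * |a * p + β| + (h - p) * |a * q + β|)
      ≤ (q - p) * ((s - (if h ∈ Set.Ioo p q then 1 else 0)) * |a * h + β|) := by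
  have hpq' : |q - p| = q - p := abs_of_pos (by linarith)
  split_ifs with hI
  · obtain ⟨h1, h2⟩ := hI
    have key : (q - p) * |a * h + β| ≤ (q - h) * |a * p + β| + (h - p) * |a * q + β| := by
      have e : (q - p) * (a * h + β) = (q - h) * (a * p + β) + (h - p) * (a * q + β) := by ring
      have := abs_add_le ((q - h) * (a * p + β)) ((h - p) * (a * q + β))
      rw [← e, abs_mul, abs_mul, abs_mul, hpq', abs_of_pos (by linarith : 0 < q - h),
        abs_of_pos (by linarith : 0 < h - p)] at this
      exact this
    nlinarith
  · have key : (q - h) * |a * p + β| + (h - p) * |a * q + β| ≤ (q - p) * |a * h + β| := by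
      simp only [Set.mem_Ioo, not_and_or, not_lt] at hI
      rcases hI with hI | hI
      · have e : (q - h) * (a * p + β) = (q - p) * (a * h + β) + (p - h) * (a * q + β) := by ring
        have := abs_add_le ((q - p) * (a * h + β)) ((p - h) * (a * q + β))
        rw [← e, abs_mul, abs_mul, abs_mul, hpq', abs_of_nonneg (by linarith : 0 ≤ q - h),
          abs_of_nonneg (by linarith : 0 ≤ p - h)] at this
        linarith
      · have e : (h - p) * (a * q + β) = (q - p) * (a * h + β) + (h - q) * (a * p + β) := by ring
        have := abs_add_le ((q - p) * (a * h + β)) ((h - q) * (a * p + β))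
        rw [← e, abs_mul, abs_mul, abs_mul, hpq', abs_of_nonneg (by linarith : 0 ≤ h - p),
          abs_of_nonneg (by linarith : 0 ≤ h - q)] at this
        linarith
    simp only [sub_zero]
    nlinarith

lemma one_dim_real (ψ : ℝ → ℝ) (hψ : Measurable ψ) (h0 : ∀ h, 0 ≤ ψ h) (h1 : ∀ h, ψ h ≤ 1)
    (R : ℝ) (hR : ∀ h, R < |h| → ψ h = 0) (hm : 0 < ∫ h, ψ h) (a β : ℝ) :
    ∫ h in Set.Ioo ((∫ h, h * ψ h) / (∫ h, ψ h) - (∫ h, ψ h) / 2)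
        ((∫ h, h * ψ h) / (∫ h, ψ h) + (∫ h, ψ h) / 2), |a * h + β| ≤ ∫ h, ψ h * |a * h + β| ∧
      Integrable (fun h => ψ h * |a * h + β|) := by
  set m := ∫ h, ψ h with hmdef
  set c := (∫ h, h * ψ h) / m with hc
  set p := c - m / 2 with hp
  set q := c + m / 2 with hq
  have hpq : p < q := by linarith
  have hintg : ∀ v : ℝ → ℝ, Continuous v → Integrable (fun h => ψ h * v h) := by
    intro v hv
    have hon : IntegrableOn v (Set.Icc (-R) R) := hv.continuousOn.integrableOn_Icc
    have : (fun h => ψ h * v h) = (Set.Icc (-R) R).indicator (fun h => ψ h * v h) := by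
      ext h
      by_cases hh : h ∈ Set.Icc (-R) R
      · simp [hh]
      · rw [Set.indicator_of_notMem hh, hR h, zero_mul]
        by_contra hcon
        exact hh (abs_le.1 (not_lt.1 hcon))
    rw [this, integrable_indicator_iff measurableSet_Icc]
    refine Integrable.mono' hon.norm ?_ ?_
    · exact (hψ.mul hv.measurable).aestronglyMeasurable
    · refine Filter.Eventually.of_forall (fun h => ?_)
      rw [norm_mul, Real.norm_of_nonneg (h0 h)]
      exact mul_le_of_le_one_left (norm_nonneg _) (h1 h)
  have hintI : ∀ v : ℝ → ℝ, Continuous v →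
      Integrable (fun h => (if h ∈ Set.Ioo p q then (1 : ℝ) else 0) * v h) := by
    intro v hv
    have hon : IntegrableOn v (Set.Ioo p q) :=
      (hv.continuousOn.integrableOn_Icc (a := p) (b := q)).mono_set Set.Ioo_subset_Icc_self
    have : (fun h => (if h ∈ Set.Ioo p q then (1 : ℝ) else 0) * v h) = (Set.Ioo p q).indicator v := by
      ext h; simp [Set.indicator_apply]
    rw [this, integrable_indicator_iff measurableSet_Ioo]
    exact hon
  have hIval : ∀ v : ℝ → ℝ, ∫ h, (if h ∈ Set.Ioo p q then (1 : ℝ) else 0) * v h =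
      ∫ h in Set.Ioo p q, v h := by
    intro v
    rw [← integral_indicator measurableSet_Ioo]
    congr 1; ext h; simp [Set.indicator_apply]
  refine ⟨?_, hintg _ (by fun_prop)⟩
  set P := |a * p + β|
  set Q := |a * q + β|
  have hle : ∫ h, (ψ h - (if h ∈ Set.Ioo p q then 1 else 0)) * ((q - h) * P + (h - p) * Q) ≤
      ∫ h, (q - p) * ((ψ h - (if h ∈ Set.Ioo p q then 1 else 0)) * |a * h + β|) := by
    refine integral_mono ?_ ?_ (fun h => chord_real a β p q h (ψ h) hpq (h0 h) (h1 h))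
    · refine ((hintg (fun h => (q - h) * P + (h - p) * Q) (by fun_prop)).sub
        (hintI (fun h => (q - h) * P + (h - p) * Q) (by fun_prop))).congr
        (Filter.Eventually.of_forall fun h => ?_)
      simp only [Pi.sub_apply]
      ring
    · refine Integrable.const_mul ?_ _
      simp only [sub_mul]
      exact (hintg (fun h => |a * h + β|) (by fun_prop)).sub (hintI (fun h => |a * h + β|) (by fun_prop))
  have hzero : ∫ h, (ψ h - (if h ∈ Set.Ioo p q then 1 else 0)) * ((q - h) * P + (h - p) * Q) = 0 := by
    have e : ∀ h, (ψ h - (if h ∈ Set.Ioo p q then 1 else 0)) * ((q - h) * P + (h - p) * Q) =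
      (Q - P) * (ψ h * h) + (q * P - p * Q) * (ψ h * 1) -
       ((Q - P) * ((if h ∈ Set.Ioo p q then 1 else 0) * h) +
        (q * P - p * Q) * ((if h ∈ Set.Ioo p q then 1 else 0) * 1)) := by intro h; ring
    simp_rw [e]
    have i1 := hintg (fun h => h) (by fun_prop)
    have i2 := hintg (fun h => 1) (by fun_prop)
    have i3 := hintI (fun h => h) (by fun_prop)
    have i4 := hintI (fun h => 1) (by fun_prop)
    rw [integral_sub ((i1.const_mul _).fun_add (i2.const_mul _)) ((i3.const_mul _).fun_add (i4.const_mul _)),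
      integral_add (i1.const_mul _) (i2.const_mul _), integral_add (i3.const_mul _) (i4.const_mul _),
      integral_const_mul, integral_const_mul, integral_const_mul, integral_const_mul,
      hIval (fun h => h), hIval (fun h => 1)]
    rw [← integral_Ioc_eq_integral_Ioo, ← integral_Ioc_eq_integral_Ioo,
      ← intervalIntegral.integral_of_le hpq.le, ← intervalIntegral.integral_of_le hpq.le]
    have e1 : ∫ h, ψ h * h = c * m := by
      rw [hc, div_mul_cancel₀ _ hm.ne']; congr 1; ext h; ring
    have e2 : ∫ h, ψ h * 1 = m := by simp [hmdef]
    rw [e1, e2, integral_id, intervalIntegral.integral_const]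
    simp only [smul_eq_mul]
    rw [hp, hq]; ring
  rw [hzero, integral_const_mul] at hle
  have h3 : 0 ≤ ∫ h, ((ψ h - (if h ∈ Set.Ioo p q then 1 else 0)) * |a * h + β|) := by
    by_contra hcon
    push Not at hcon
    nlinarith
  simp only [sub_mul] at h3
  rw [integral_sub (hintg (fun h => |a * h + β|) (by fun_prop))
    (hintI (fun h => |a * h + β|) (by fun_prop)), hIval (fun h => |a * h + β|)] at h3
  linarith

lemma one_dim (φ : ℝ → ℝ≥0∞) (hφ : Measurable φ) (h1 : ∀ h, φ h ≤ 1)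
    (R : ℝ) (hR : ∀ h, R < |h| → φ h = 0) :
    ∃ c : ℝ, ∀ a β : ℝ, ∫⁻ h, box (∫⁻ h, φ h) h * ENNReal.ofReal |a * (h + c) + β| ≤
      ∫⁻ h, φ h * ENNReal.ofReal |a * h + β| := by
  set ψ : ℝ → ℝ := fun h => (φ h).toReal with hψ
  have hfin : ∀ h, φ h ≠ ∞ := fun h => ne_top_of_le_ne_top ENNReal.one_ne_top (h1 h)
  have hm : ∫ h, ψ h = (∫⁻ h, φ h).toReal :=
    integral_toReal hφ.aemeasurable (Filter.Eventually.of_forall fun h => (hfin h).lt_top)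
  rcases (ENNReal.toReal_nonneg (a := ∫⁻ h, φ h)).eq_or_lt with h0 | h0
  · refine ⟨0, fun a β => ?_⟩
    have : ∀ h, box (∫⁻ h, φ h) h = 0 := by
      intro h; simp [box, ← h0]
    simp [this]
  · refine ⟨(∫ h, h * ψ h) / (∫ h, ψ h), fun a β => ?_⟩
    obtain ⟨hle, hintg⟩ := one_dim_real ψ (by fun_prop) (fun h => ENNReal.toReal_nonneg)
      (fun h => by simpa using ENNReal.toReal_mono ENNReal.one_ne_top (h1 h)) R
      (fun h hh => by simp [hψ, hR h hh]) (hm ▸ h0) a β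
    set c := (∫ h, h * ψ h) / (∫ h, ψ h) with hc
    rw [hm] at hle
    set m := (∫⁻ h, φ h).toReal with hmm
    have eR : ∫⁻ h, φ h * ENNReal.ofReal |a * h + β| = ENNReal.ofReal (∫ h, ψ h * |a * h + β|) := by
      rw [ofReal_integral_eq_lintegral_ofReal hintg (Filter.Eventually.of_forall fun h => by positivity)]
      refine lintegral_congr fun h => ?_
      rw [ENNReal.ofReal_mul ENNReal.toReal_nonneg, ENNReal.ofReal_toReal (hfin h)]
    have eL : ∫⁻ h, box (∫⁻ h, φ h) h * ENNReal.ofReal |a * (h + c) + β| =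
        ENNReal.ofReal (∫ h in Set.Ioo (c - m / 2) (c + m / 2), |a * h + β|) := by
      rw [ofReal_integral_eq_lintegral_ofReal ?_ (Filter.Eventually.of_forall fun h => by positivity)]
      · rw [← lintegral_sub_right_eq_self _ c, ← lintegral_indicator measurableSet_Ioo]
        refine lintegral_congr fun h => ?_
        have : |h - c| < m / 2 ↔ h ∈ Set.Ioo (c - m / 2) (c + m / 2) := by
          rw [abs_lt, Set.mem_Ioo]; constructor <;> rintro ⟨h1, h2⟩ <;> constructor <;> linarith
        simp only [box, ← hmm, this, Set.indicator_apply, sub_add_cancel]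
        split_ifs <;> simp
      · exact ((Continuous.continuousOn (by fun_prop)).integrableOn_Icc
          (a := c - m / 2) (b := c + m / 2)).mono_set Set.Ioo_subset_Icc_self
    rw [eL, eR]
    exact ENNReal.ofReal_le_ofReal hle

lemma multi_dim_shift {N : ℕ} (φ : Fin N → ℝ → ℝ≥0∞) (hφ : ∀ i, Measurable (φ i))
    (h1 : ∀ i h, φ i h ≤ 1) (R : ℝ) (hR : ∀ i h, R < |h| → φ i h = 0) (a : Fin N → ℝ) :
    ∃ c : ℝ, ∀ β : ℝ,
    ∫⁻ h : Fin N → ℝ, (∏ i, box (∫⁻ h, φ i h) (h i)) * ENNReal.ofReal |∑ i, a i * h i + c + β| ≤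
      ∫⁻ h : Fin N → ℝ, (∏ i, φ i (h i)) * ENNReal.ofReal |∑ i, a i * h i + β| := by
  induction N with
  | zero => exact ⟨0, fun β => by simp⟩
  | succ N ih =>
    obtain ⟨c, hc⟩ := ih (fun i => φ i.succ) (fun i => hφ _) (fun i => h1 _) (fun i => hR _)
      (fun i => a i.succ)
    obtain ⟨c0, hc0⟩ := one_dim (φ 0) (hφ 0) (h1 0) R (hR 0)
    refine ⟨a 0 * c0 + c, fun β => ?_⟩
    rw [lintegral_pi_succ (by fun_prop), lintegral_pi_succ (by fun_prop)]
    simp only [Fin.prod_univ_succ, Fin.sum_univ_succ, Fin.cons_zero, Fin.cons_succ]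
    calc _ = ∫⁻ x : Fin N → ℝ, ∫⁻ t : ℝ, (∏ i : Fin N, box (∫⁻ h, φ i.succ h) (x i)) *
            (box (∫⁻ h, φ 0 h) t *
              ENNReal.ofReal |a 0 * (t + c0) + (∑ i : Fin N, a i.succ * x i + c + β)|) := by
          rw [lintegral_lintegral_swap (by fun_prop)]
          refine lintegral_congr fun x => lintegral_congr fun t => ?_
          rw [← mul_assoc]
          congr 1
          · ring
          · congr 2; ring
      _ ≤ ∫⁻ x : Fin N → ℝ, ∫⁻ t : ℝ, (∏ i : Fin N, box (∫⁻ h, φ i.succ h) (x i)) *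
            (φ 0 t * ENNReal.ofReal |a 0 * t + (∑ i : Fin N, a i.succ * x i + c + β)|) := by
          refine lintegral_mono fun x => ?_
          rw [lintegral_const_mul _ (by fun_prop), lintegral_const_mul _ (by fun_prop)]
          exact mul_le_mul' le_rfl (hc0 _ _)
      _ = ∫⁻ t : ℝ, φ 0 t * ∫⁻ x : Fin N → ℝ, (∏ i : Fin N, box (∫⁻ h, φ i.succ h) (x i)) *
            ENNReal.ofReal |∑ i : Fin N, a i.succ * x i + c + (a 0 * t + β)| := by
          rw [lintegral_lintegral_swap (by fun_prop)]
          refine lintegral_congr fun t => ?_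
          rw [← lintegral_const_mul _ (by fun_prop)]
          refine lintegral_congr fun x => ?_
          rw [mul_left_comm]
          congr 4; ring
      _ ≤ ∫⁻ t : ℝ, φ 0 t * ∫⁻ x : Fin N → ℝ, (∏ i : Fin N, φ i.succ (x i)) *
            ENNReal.ofReal |∑ i : Fin N, a i.succ * x i + (a 0 * t + β)| := by
          exact lintegral_mono fun t => mul_le_mul' le_rfl (hc _)
      _ = _ := by
          refine lintegral_congr fun t => ?_
          rw [← lintegral_const_mul _ (by fun_prop)]
          refine lintegral_congr fun x => ?_
          rw [← mul_assoc]
          congr 3; ring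

lemma multi_dim {N : ℕ} (φ : Fin N → ℝ → ℝ≥0∞) (hφ : ∀ i, Measurable (φ i))
    (h1 : ∀ i h, φ i h ≤ 1) (R : ℝ) (hR : ∀ i h, R < |h| → φ i h = 0) (a : Fin N → ℝ) :
    ∫⁻ h : Fin N → ℝ, (∏ i, box (∫⁻ h, φ i h) (h i)) * ENNReal.ofReal |∑ i, a i * h i| ≤
      ∫⁻ h : Fin N → ℝ, (∏ i, φ i (h i)) * ENNReal.ofReal |∑ i, a i * h i| := by
  obtain ⟨c, hc⟩ := multi_dim_shift φ hφ h1 R hR a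
  have hc := hc 0
  simp only [add_zero] at hc
  refine le_trans ?_ hc
  have hneg : ∫⁻ h : Fin N → ℝ, (∏ i, box (∫⁻ h, φ i h) (h i)) *
      ENNReal.ofReal |∑ i, a i * h i + c| = ∫⁻ h : Fin N → ℝ, (∏ i, box (∫⁻ h, φ i h) (h i)) *
      ENNReal.ofReal |∑ i, a i * h i - c| := by
    rw [← lintegral_neg_eq_self]
    refine lintegral_congr fun h => ?_
    simp only [Pi.neg_apply, box_neg, mul_neg, Finset.sum_neg_distrib]
    rw [← abs_neg]; congr 3; ring
  have h2 : 2 * ∫⁻ h : Fin N → ℝ, (∏ i, box (∫⁻ h, φ i h) (h i)) * ENNReal.ofReal |∑ i, a i * h i| ≤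
      2 * ∫⁻ h : Fin N → ℝ, (∏ i, box (∫⁻ h, φ i h) (h i)) *
      ENNReal.ofReal |∑ i, a i * h i + c| := by
    rw [two_mul (∫⁻ h : Fin N → ℝ, (∏ i, box (∫⁻ h, φ i h) (h i)) *
      ENNReal.ofReal |∑ i, a i * h i + c|)]
    nth_rewrite 2 [hneg]
    rw [← lintegral_const_mul _ (by fun_prop), ← lintegral_add_left (by fun_prop)]
    refine lintegral_mono fun h => ?_
    simp only
    rw [← mul_add, mul_left_comm]
    gcongr
    rw [← ENNReal.ofReal_add (by positivity) (by positivity),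
      show (2 : ℝ≥0∞) = ENNReal.ofReal 2 by simp, ← ENNReal.ofReal_mul (by norm_num)]
    refine ENNReal.ofReal_le_ofReal ?_
    have := abs_add_le (∑ i, a i * h i + c) (∑ i, a i * h i - c)
    rw [show (∑ i, a i * h i + c) + (∑ i, a i * h i - c) = 2 * ∑ i, a i * h i by ring, abs_mul] at this
    simpa using this
  exact (ENNReal.mul_le_mul_iff_right (by norm_num) (by norm_num)).1 h2

/-- The matrix with rows `(1, Y i)`. -/
def simpMat {d : ℕ} (Y : Fin (d + 1) → EE d) : Matrix (Fin (d + 1)) (Fin (d + 1)) ℝ :=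
  Matrix.of fun i j => econs 1 (Y i) j

lemma continuous_econs_one {k : ℕ} : Continuous (fun z : EE k => econs 1 z) := by
  unfold econs
  refine (PiLp.continuous_toLp 2 _).comp ?_
  refine continuous_pi fun i => ?_
  refine Fin.cases ?_ (fun i => ?_) i
  · simpa using continuous_const
  · simp only [Fin.cons_succ]; fun_prop

lemma continuous_simpMat_det {d : ℕ} :
    Continuous (fun Y : Fin (d + 1) → EE d => (simpMat Y).det) := by
  refine Continuous.matrix_det ?_
  unfold simpMat
  refine continuous_matrix fun i j => ?_
  simp only [Matrix.of_apply]
  have : Continuous (fun Y : Fin (d + 1) → EE d => econs 1 (Y i)) :=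
    continuous_econs_one.comp (continuous_apply i)
  fun_prop

@[fun_prop] lemma measurable_simpMat_det {d : ℕ} :
    Measurable (fun Y : Fin (d + 1) → EE d => (simpMat Y).det) :=
  continuous_simpMat_det.measurable

/-- The weighted simplex-volume functional. -/
def DD {d : ℕ} (g : EE d → ℝ≥0∞) : ℝ≥0∞ :=
  ∫⁻ Y : Fin (d + 1) → EE d, (∏ i, g (Y i)) * ENNReal.ofReal |(simpMat Y).det|

lemma DD_mono {d : ℕ} {g g' : EE d → ℝ≥0∞} (h : ∀ x, g x ≤ g' x) : DD g ≤ DD g' := by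
  unfold DD
  refine lintegral_mono fun Y => ?_
  exact mul_le_mul' (Finset.prod_le_prod' fun i _ => h _) le_rfl

lemma DD_const_mul {d : ℕ} {g : EE d → ℝ≥0∞} (hg : Measurable g) (c : ℝ≥0∞) :
    DD (fun x => c * g x) = c ^ (d + 1) * DD g := by
  unfold DD
  rw [← lintegral_const_mul _ (by fun_prop)]
  refine lintegral_congr fun Y => ?_
  rw [Finset.prod_mul_distrib]
  simp [mul_assoc]

/-- Combined Steiner symmetrization and bathtub rearrangement in the first coordinate. -/
def st {k : ℕ} (g : EE (k + 1) → ℝ≥0∞) : EE (k + 1) → ℝ≥0∞ :=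
  fun x => box (∫⁻ h, g (econs h (etail x))) (x 0)

lemma measurable_st {k : ℕ} {g : EE (k + 1) → ℝ≥0∞} (hg : Measurable g) : Measurable (st g) := by
  unfold st
  have : Measurable (fun z : EE k => ∫⁻ h, g (econs h z)) := by
    refine Measurable.lintegral_prod_right' (f := fun p : EE k × ℝ => g (econs p.2 p.1)) ?_
    fun_prop
  fun_prop

lemma det_lin {k : ℕ} (z : Fin (k + 2) → EE k) :
    ∃ a : Fin (k + 2) → ℝ, ∀ h : Fin (k + 2) → ℝ,
      (simpMat (fun i => econs (h i) (z i))).det = ∑ i, a i * h i := by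
  set A := simpMat (fun i => econs 0 (z i)) with hA
  refine ⟨fun i => Matrix.cramer A (Pi.single i 1) 1, fun h => ?_⟩
  have e : simpMat (fun i => econs (h i) (z i)) = A.updateCol 1 h := by
    ext i j
    refine Fin.cases ?_ (fun j => ?_) j
    · rw [Matrix.updateCol_ne (by simp)]; simp [hA, simpMat]
    · refine Fin.cases ?_ (fun j => ?_) j
      · have : (Fin.succ 0 : Fin (k + 2)) = 1 := rfl
        rw [this, Matrix.updateCol_self, ← this]
        simp only [simpMat, Matrix.of_apply, econs_succ, econs_zero]
      · rw [Matrix.updateCol_ne]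
        · simp [hA, simpMat]
        · simp [Fin.ext_iff]
  rw [e, ← Matrix.cramer_apply]
  conv_lhs => rw [← Finset.univ_sum_single h]
  rw [map_sum, Finset.sum_apply]
  refine Finset.sum_congr rfl fun i _ => ?_
  have : (Pi.single i (h i) : Fin (k + 2) → ℝ) = h i • Pi.single i 1 := by
    rw [← Pi.single_smul]; simp
  rw [this, map_smul, Pi.smul_apply, smul_eq_mul, mul_comm]

lemma abs_le_norm_econs {k : ℕ} (h : ℝ) (z : EE k) : |h| ≤ ‖econs h z‖ := by
  have := norm_sq_econs h z
  refine abs_le_of_sq_le_sq (by nlinarith [sq_nonneg ‖z‖]) (norm_nonneg _) |> fun h => h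

lemma DD_st_le {k : ℕ} {g : EE (k + 1) → ℝ≥0∞} (hg : Measurable g) (h1 : ∀ x, g x ≤ 1)
    (R : ℝ) (hR : ∀ x, R < ‖x‖ → g x = 0) : DD (st g) ≤ DD g := by
  have hst := measurable_st hg
  unfold DD
  rw [lintegral_pi_econs (by fun_prop), lintegral_pi_econs (by fun_prop)]
  refine lintegral_mono fun z => ?_
  obtain ⟨a, ha⟩ := det_lin z
  simp only [ha, st, econs_zero, etail_econs]
  exact multi_dim (fun i h => g (econs h (z i))) (fun i => by fun_prop) (fun i h => h1 _) R
    (fun i h hh => hR _ (hh.trans_le (abs_le_norm_econs _ _))) a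

lemma lintegral_affine {E : Type*} [NormedAddCommGroup E] [NormedSpace ℝ E] [MeasurableSpace E]
    [BorelSpace E] [FiniteDimensional ℝ E] (μ : Measure E) [μ.IsAddHaarMeasure]
    (A : E →ₗ[ℝ] E) (hA : LinearMap.det A ≠ 0) (c : E) {F : E → ℝ≥0∞} (hF : Measurable F) :
    ENNReal.ofReal |LinearMap.det A| * ∫⁻ x, F (A x + c) ∂μ = ∫⁻ x, F x ∂μ := by
  have hAm : Measurable A := A.continuous_of_finiteDimensional.measurable
  have h1 : ∫⁻ x, F (A x + c) ∂μ = ∫⁻ y, F (y + c) ∂(Measure.map A μ) := by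
    rw [lintegral_map (by fun_prop) hAm]
  rw [h1, Measure.map_linearMap_addHaar_eq_smul_addHaar μ hA, lintegral_smul_measure,
    lintegral_add_right_eq_self, smul_eq_mul, ← mul_assoc, ← ENNReal.ofReal_mul (abs_nonneg _),
    ← abs_mul, mul_inv_cancel₀ hA]
  simp

lemma simpMat_affine {d : ℕ} (A : EE d →ₗ[ℝ] EE d) (c : EE d) (Y : Fin (d + 1) → EE d) :
    (simpMat (fun i => A (Y i) + c)).det = (simpMat Y).det * LinearMap.det A := by
  set b := (EuclideanSpace.basisFun (Fin d) ℝ).toBasis with hb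
  set T := LinearMap.toMatrix b b A with hT
  have hAy : ∀ (y : EE d) (j : Fin d), A y j = ∑ l, T j l * y l := by
    intro y j
    have := LinearMap.toMatrix_mulVec_repr b b A y
    have h2 := congrFun this j
    simp only [hb] at h2
    simp only [OrthonormalBasis.coe_toBasis_repr_apply, EuclideanSpace.basisFun_repr] at h2
    rw [← h2]
    simp [Matrix.mulVec, dotProduct, hT, hb]
  set B : Matrix (Fin (d + 1)) (Fin (d + 1)) ℝ := Matrix.of fun j j' =>
    (Fin.cases (Fin.cases 1 (fun l' => c l') j')
      (fun l => Fin.cases 0 (fun l' => T l' l) j') j : ℝ) with hB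
  have e : simpMat (fun i => A (Y i) + c) = simpMat Y * B := by
    ext i j
    rw [Matrix.mul_apply, Fin.sum_univ_succ]
    refine Fin.cases ?_ (fun j => ?_) j
    · simp [simpMat, hB]
    · simp [simpMat, hB, hAy]
      rw [add_comm]; congr 1
      refine Finset.sum_congr rfl fun l _ => by ring
  have hdB : B.det = LinearMap.det A := by
    rw [Matrix.det_succ_column_zero, Fin.sum_univ_succ, ← LinearMap.det_toMatrix b A, ← hT]
    have : (B.submatrix (Fin.succAbove 0) Fin.succ) = T.transpose := by
      ext i j; simp [hB]
    rw [this]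
    simp [hB]
  rw [e, Matrix.det_mul, hdB]

lemma DD_affine {d : ℕ} (A : EE d →ₗ[ℝ] EE d) (hA : LinearMap.det A ≠ 0) (c : EE d)
    {g : EE d → ℝ≥0∞} (hg : Measurable g) :
    ENNReal.ofReal |LinearMap.det A| ^ (d + 2) * DD (fun x => g (A x + c)) = DD g := by
  set L : (Fin (d + 1) → EE d) →ₗ[ℝ] (Fin (d + 1) → EE d) :=
    LinearMap.pi (fun i => A ∘ₗ LinearMap.proj i) with hL
  have hdet : LinearMap.det L = LinearMap.det A ^ (d + 1) := by
    rw [hL, LinearMap.det_pi]; simp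
  unfold DD
  rw [← lintegral_affine volume L (by rw [hdet]; exact pow_ne_zero _ hA) (fun _ => c)
    (F := fun Y => (∏ i, g (Y i)) * ENNReal.ofReal |(simpMat Y).det|) (by fun_prop)]
  have hAm : Measurable A := A.continuous_of_finiteDimensional.measurable
  have e : ∀ Y : Fin (d + 1) → EE d, L Y + (fun _ => c) = fun i => A (Y i) + c := by
    intro Y; ext i; simp [hL]
  simp only [e, simpMat_affine, abs_mul]
  rw [hdet, abs_pow, ENNReal.ofReal_pow (abs_nonneg _), pow_succ _ (d + 1), mul_assoc]
  congr 1
  rw [← lintegral_const_mul _ (by fun_prop)]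
  refine lintegral_congr fun Y => ?_
  rw [ENNReal.ofReal_mul (abs_nonneg _)]; ring

/-- Admissible densities. -/
structure Adm {d : ℕ} (R r : ℝ) (g : EE d → ℝ≥0∞) : Prop where
  meas : Measurable g
  le_one : ∀ x, g x ≤ 1
  supp : ∀ x, R < ‖x‖ → g x = 0
  mass : ∫⁻ x, g x = volume (ball (0 : EE d) r)

/-- Part of `g` outside the ball. -/
def pf {d : ℕ} (r : ℝ) (g : EE d → ℝ≥0∞) : EE d → ℝ≥0∞ := (ball (0 : EE d) r)ᶜ.indicator g

/-- Deficit of `g` inside the ball. -/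
def qf {d : ℕ} (r : ℝ) (g : EE d → ℝ≥0∞) : EE d → ℝ≥0∞ :=
  (ball (0 : EE d) r).indicator (fun x => 1 - g x)

lemma measurable_pf {d : ℕ} (r : ℝ) {g : EE d → ℝ≥0∞} (hg : Measurable g) : Measurable (pf r g) :=
  hg.indicator measurableSet_ball.compl

lemma measurable_qf {d : ℕ} (r : ℝ) {g : EE d → ℝ≥0∞} (hg : Measurable g) : Measurable (qf r g) :=
  (measurable_const.sub hg).indicator measurableSet_ball

lemma pq_id {d : ℕ} (r : ℝ) {g : EE d → ℝ≥0∞} (h1 : ∀ x, g x ≤ 1) (x : EE d) :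
    g x + qf r g x = pf r g x + (ball (0 : EE d) r).indicator 1 x := by
  by_cases hx : x ∈ ball (0 : EE d) r
  · simp only [pf, qf, Set.indicator_of_mem hx, Set.indicator_of_notMem (Set.notMem_compl_iff.2 hx)]
    simp [add_tsub_cancel_of_le (h1 x)]
  · simp only [pf, qf, Set.indicator_of_notMem hx, Set.indicator_of_mem (Set.mem_compl hx)]

lemma lintegral_qf {d : ℕ} {R r : ℝ} {g : EE d → ℝ≥0∞} (hg : Adm R r g) :
    ∫⁻ x, qf r g x = ∫⁻ x, pf r g x := by
  have h : ∫⁻ x, (g x + qf r g x) = ∫⁻ x, (pf r g x + (ball (0 : EE d) r).indicator 1 x) :=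
    lintegral_congr (pq_id r hg.le_one)
  rw [lintegral_add_left hg.meas, lintegral_add_left (measurable_pf r hg.meas),
    lintegral_indicator_one measurableSet_ball, hg.mass, add_comm] at h
  exact (ENNReal.add_left_inj measure_ball_lt_top.ne).1 h

lemma lintegral_box {m : ℝ≥0∞} (hm : m ≠ ∞) : ∫⁻ h, box m h = m := by
  have : ∀ h, box m h = (Set.Ioo (-(m.toReal / 2)) (m.toReal / 2)).indicator 1 h := by
    intro h; simp [box, Set.indicator_apply, abs_lt]
  simp_rw [this]
  rw [lintegral_indicator_one measurableSet_Ioo, Real.volume_Ioo]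
  ring_nf
  exact ENNReal.ofReal_toReal hm

lemma slice_mem {k : ℕ} (r : ℝ) (hr : 0 < r) (h : ℝ) (z : EE k) :
    econs h z ∈ ball (0 : EE (k + 1)) r ↔ |h| < √(r ^ 2 - ‖z‖ ^ 2) := by
  rw [mem_ball_zero_iff, Real.lt_sqrt (abs_nonneg _), sq_abs, ← sq_lt_sq₀ (norm_nonneg _) hr.le,
    norm_sq_econs]
  constructor <;> intro h <;> linarith

lemma slice_mass_le {k : ℕ} {g : EE (k + 1) → ℝ≥0∞} {R : ℝ} (hR0 : 0 < R) (h1 : ∀ x, g x ≤ 1)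
    (hR : ∀ x, R < ‖x‖ → g x = 0) (z : EE k) :
    ∫⁻ h, g (econs h z) ≤ ENNReal.ofReal (2 * √(R ^ 2 - ‖z‖ ^ 2)) := by
  calc ∫⁻ h, g (econs h z) ≤
      ∫⁻ h, (Set.Icc (-√(R ^ 2 - ‖z‖ ^ 2)) (√(R ^ 2 - ‖z‖ ^ 2))).indicator 1 h := by
        refine lintegral_mono fun h => ?_
        by_cases hh : h ∈ Set.Icc (-√(R ^ 2 - ‖z‖ ^ 2)) (√(R ^ 2 - ‖z‖ ^ 2))
        · rw [Set.indicator_of_mem hh]; exact h1 _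
        · rw [Set.indicator_of_notMem hh]
          refine (hR _ ?_).le
          have : ¬ |h| ≤ √(R ^ 2 - ‖z‖ ^ 2) := fun hc => hh (abs_le.1 hc)
          rw [not_le, Real.sqrt_lt' (by
            by_contra hc
            have : |h| = 0 := le_antisymm (not_lt.1 hc) (abs_nonneg _)
            have := Real.sqrt_nonneg (R ^ 2 - ‖z‖ ^ 2)
            linarith), sq_abs] at this
          rw [← sq_lt_sq₀ hR0.le (norm_nonneg _), norm_sq_econs]
          linarith
    _ = _ := by
      rw [lintegral_indicator_one measurableSet_Icc, Real.volume_Icc]; ring_nf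

lemma slice_mass_le' {k : ℕ} {g : EE (k + 1) → ℝ≥0∞} {R : ℝ} (hR0 : 0 < R) (h1 : ∀ x, g x ≤ 1)
    (hR : ∀ x, R < ‖x‖ → g x = 0) (z : EE k) :
    ∫⁻ h, g (econs h z) ≤ ENNReal.ofReal (2 * R) := by
  refine (slice_mass_le hR0 h1 hR z).trans (ENNReal.ofReal_le_ofReal ?_)
  have : √(R ^ 2 - ‖z‖ ^ 2) ≤ R := by
    rw [Real.sqrt_le_left hR0.le]; nlinarith [sq_nonneg ‖z‖]
  linarith

lemma Adm.st {k : ℕ} {g : EE (k + 1) → ℝ≥0∞} {R r : ℝ} (hR0 : 0 < R) (hg : Adm R r g) :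
    Adm R r (st g) where
  meas := measurable_st hg.meas
  le_one := fun x => box_le_one _ _
  supp := by
    intro x hx
    by_contra hc
    have hlt : |x 0| < (∫⁻ h, g (econs h (etail x))).toReal / 2 := by
      by_contra hcc
      exact hc (by simp [_root_.st, box, hcc])
    have h2 := slice_mass_le hR0 hg.le_one hg.supp (etail x)
    have h3 := ENNReal.toReal_mono ENNReal.ofReal_ne_top h2
    rw [ENNReal.toReal_ofReal (by positivity)] at h3
    have h4 : |x 0| < √(R ^ 2 - ‖etail x‖ ^ 2) := by linarith
    rw [Real.lt_sqrt (abs_nonneg _), sq_abs] at h4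
    have h5 := norm_sq_econs (x 0) (etail x)
    rw [econs_etail] at h5
    have : ‖x‖ ^ 2 < R ^ 2 := by linarith
    rw [sq_lt_sq₀ (norm_nonneg _) hR0.le] at this
    linarith
  mass := by
    rw [← hg.mass, lintegral_econs' (measurable_st hg.meas), lintegral_econs' hg.meas]
    refine lintegral_congr fun z => ?_
    simp only [_root_.st, econs_zero, etail_econs]
    exact lintegral_box (ne_top_of_le_ne_top ENNReal.ofReal_ne_top
      (slice_mass_le' hR0 hg.le_one hg.supp z))

lemma slice_err {k : ℕ} {g : EE (k + 1) → ℝ≥0∞} {R r : ℝ} (hR0 : 0 < R) (hr : 0 < r) (hrR : r ≤ R)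
    (hg : Adm R r g) (z : EE k) :
    ENNReal.ofReal (2 * R) * (∫⁻ h, pf r (st g) (econs h z)) +
      (∫⁻ h, pf r g (econs h z)) * (∫⁻ h, qf r g (econs h z)) ≤
    ENNReal.ofReal (2 * R) * ∫⁻ h, pf r g (econs h z) := by
  classical
  have hmeas := hg.meas
  have hpm := measurable_pf r hg.meas
  have hqm := measurable_qf r hg.meas
  set m := ∫⁻ h, g (econs h z) with hm
  set a := ∫⁻ h, pf r g (econs h z) with ha
  set b := ∫⁻ h, qf r g (econs h z) with hb
  have hmR : m ≤ ENNReal.ofReal (2 * R) := slice_mass_le' hR0 hg.le_one hg.supp z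
  have haR : a ≤ ENNReal.ofReal (2 * R) := by
    refine le_trans (lintegral_mono fun h => ?_) hmR
    exact Set.indicator_le_self _ _ _
  have hbR : b ≤ ENNReal.ofReal (2 * R) := by
    refine slice_mass_le' hR0 (fun x => ?_) (fun x hx => ?_) z
    · exact (Set.indicator_le_self _ _ _).trans tsub_le_self
    · refine Set.indicator_of_notMem ?_ _
      rw [mem_ball_zero_iff]; linarith
  set ρ := √(r ^ 2 - ‖z‖ ^ 2) with hρ
  have hρ0 : 0 ≤ ρ := Real.sqrt_nonneg _
  have hbal : m + b = a + ENNReal.ofReal (2 * ρ) := by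
    have h : ∫⁻ h, (g (econs h z) + qf r g (econs h z)) =
        ∫⁻ h, (pf r g (econs h z) + (ball (0 : EE (k + 1)) r).indicator 1 (econs h z)) :=
      lintegral_congr fun h => pq_id r hg.le_one _
    rw [lintegral_add_left (by fun_prop), lintegral_add_left (by fun_prop)] at h
    rw [hm, hb, ha, h]
    congr 1
    have : ∀ h, (ball (0 : EE (k + 1)) r).indicator (1 : EE (k + 1) → ℝ≥0∞) (econs h z) =
        (Set.Ioo (-ρ) ρ).indicator 1 h := by
      intro h
      simp only [Set.indicator_apply, slice_mem r hr, Set.mem_Ioo, ← abs_lt, hρ]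
      rfl
    simp_rw [this]
    rw [lintegral_indicator_one measurableSet_Ioo, Real.volume_Ioo]
    congr 1; ring
  have hnew : ∫⁻ h, pf r (st g) (econs h z) ≤ m - ENNReal.ofReal (2 * ρ) := by
    have e : ∀ h, pf r (st g) (econs h z) =
        ((Set.Ioo (-(m.toReal / 2)) (m.toReal / 2)) \ Set.Ioo (-ρ) ρ).indicator 1 h := by
      intro h
      simp only [pf, st, Set.indicator_apply, Set.mem_compl_iff, slice_mem r hr, ← hρ, econs_zero,
        etail_econs, ← hm, box, Set.mem_sdiff, Set.mem_Ioo, ← abs_lt]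
      by_cases h1 : |h| < ρ <;> by_cases h2 : |h| < m.toReal / 2 <;> simp [h1, h2]
    simp_rw [e]
    rw [lintegral_indicator_one (measurableSet_Ioo.diff measurableSet_Ioo)]
    rcases le_total (m.toReal / 2) ρ with hle | hle
    · rw [Set.sdiff_eq_empty.2 (Set.Ioo_subset_Ioo (by linarith) hle)]
      simp
    · rw [measure_sdiff (Set.Ioo_subset_Ioo (by linarith) hle) measurableSet_Ioo.nullMeasurableSet
        (by simp), Real.volume_Ioo, Real.volume_Ioo]
      refine tsub_le_tsub (le_of_eq ?_) (le_of_eq ?_)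
      · ring_nf
        exact ENNReal.ofReal_toReal (ne_top_of_le_ne_top ENNReal.ofReal_ne_top hmR)
      · congr 1; ring
  -- arithmetic
  have hT : ENNReal.ofReal (2 * R) ≠ ∞ := ENNReal.ofReal_ne_top
  have hsub : (m - ENNReal.ofReal (2 * ρ)) + min a b ≤ a := by
    rcases le_total m (ENNReal.ofReal (2 * ρ)) with hle | hle
    · rw [tsub_eq_zero_of_le hle, zero_add]; exact min_le_left _ _
    · refine (add_le_add le_rfl (min_le_right a b)).trans ?_
      have h2 : (m - ENNReal.ofReal (2 * ρ)) + b + ENNReal.ofReal (2 * ρ) =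
          a + ENNReal.ofReal (2 * ρ) := by
        rw [← hbal, add_right_comm, tsub_add_cancel_of_le hle]
      exact ((ENNReal.add_left_inj ENNReal.ofReal_ne_top).1 h2).le
  have hab : a * b ≤ ENNReal.ofReal (2 * R) * min a b := by
    rcases le_total a b with hle | hle
    · rw [min_eq_left hle, mul_comm]; gcongr
    · rw [min_eq_right hle]; gcongr
  calc _ ≤ ENNReal.ofReal (2 * R) * (m - ENNReal.ofReal (2 * ρ)) +
        ENNReal.ofReal (2 * R) * min a b := add_le_add (mul_le_mul' le_rfl hnew) hab
    _ ≤ _ := by rw [← mul_add]; exact mul_le_mul' le_rfl hsub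

/-- The error functional. -/
def err {d : ℕ} (r : ℝ) (g : EE d → ℝ≥0∞) : ℝ≥0∞ := ∫⁻ x, pf r g x

lemma err_st {k : ℕ} {g : EE (k + 1) → ℝ≥0∞} {R r : ℝ} (hR0 : 0 < R) (hr : 0 < r) (hrR : r ≤ R)
    (hg : Adm R r g) :
    ENNReal.ofReal (2 * R) * err r (st g) +
      ∫⁻ x, pf r g x * ∫⁻ s : ℝ, qf r g (x + s • econs 1 0) ≤
    ENNReal.ofReal (2 * R) * err r g := by
  have hpm := measurable_pf r hg.meas
  have hpm' := measurable_pf r (measurable_st hg.meas)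
  have hqm := measurable_qf r hg.meas
  have hsl : ∀ {F : EE (k + 1) → ℝ≥0∞}, Measurable F → Measurable fun z : EE k => ∫⁻ h, F (econs h z) := by
    intro F hF
    exact Measurable.lintegral_prod_right' (f := fun p : EE k × ℝ => F (econs p.2 p.1)) (by fun_prop)
  have e1 : ∫⁻ x, pf r g x * ∫⁻ s : ℝ, qf r g (x + s • econs 1 0) =
      ∫⁻ z : EE k, (∫⁻ h, pf r g (econs h z)) * (∫⁻ h, qf r g (econs h z)) := by
    have hms : Measurable fun x : EE (k + 1) => ∫⁻ s : ℝ, qf r g (x + s • econs 1 0) :=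
      Measurable.lintegral_prod_right'
        (f := fun p : EE (k + 1) × ℝ => qf r g (p.1 + p.2 • econs 1 0)) (by fun_prop)
    rw [lintegral_econs' (by fun_prop)]
    refine lintegral_congr fun z => ?_
    rw [← lintegral_mul_const _ (by fun_prop)]
    refine lintegral_congr fun h => ?_
    congr 1
    have : ∀ s : ℝ, econs h z + s • econs 1 0 = econs (h + s) z := by
      intro s; rw [← econs_smul, ← econs_add]; simp
    simp_rw [this]
    exact lintegral_add_left_eq_self (fun s => qf r g (econs s z)) h
  rw [e1, err, err, lintegral_econs' hpm', lintegral_econs' hpm, 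
    ← lintegral_const_mul _ (hsl hpm'), ← lintegral_const_mul _ (hsl hpm),
    ← lintegral_add_left ((hsl hpm').const_mul _)]
  exact lintegral_mono fun z => slice_err hR0 hr hrR hg z

lemma lintegral_polar {k : ℕ} {F : EE (k + 1) → ℝ≥0∞} (hF : Measurable F) :
    ∫⁻ x, F x = ∫⁻ θ, (∫⁻ s in Set.Ioi (0 : ℝ), ENNReal.ofReal (s ^ k) * F (s • (θ : EE (k + 1))))
      ∂(volume : Measure (EE (k + 1))).toSphere := by
  have h0 : ∫⁻ x, F x = ∫⁻ x : ({(0 : EE (k + 1))}ᶜ : Set (EE (k + 1))), F x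
      ∂((volume : Measure (EE (k + 1))).comap (↑)) := by
    rw [lintegral_subtype_comap (measurableSet_singleton _).compl]
    rw [Measure.restrict_eq_self_of_ae_mem]
    rw [ae_iff]; simp
  have mp := (volume : Measure (EE (k + 1))).measurePreserving_homeomorphUnitSphereProd
  have hd : Module.finrank ℝ (EE (k + 1)) - 1 = k := by simp
  rw [hd] at mp
  have h1 := mp.lintegral_comp (f := fun p => F (p.2.1 • (p.1 : EE (k + 1)))) (by fun_prop)
  have h2 : ∀ x : ({(0 : EE (k + 1))}ᶜ : Set (EE (k + 1))),
      ((homeomorphUnitSphereProd (EE (k + 1)) x).2.1) •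
        ((homeomorphUnitSphereProd (EE (k + 1)) x).1 : EE (k + 1)) = x := by
    intro x
    have := (homeomorphUnitSphereProd (EE (k + 1))).symm_apply_apply x
    exact congrArg Subtype.val this
  simp only [h2] at h1
  rw [h0, h1, lintegral_prod _ (by fun_prop)]
  refine lintegral_congr fun θ => ?_
  rw [Measure.volumeIoiPow, lintegral_withDensity_eq_lintegral_mul _ (by fun_prop) (by fun_prop)]
  simp only [Pi.mul_apply]
  exact lintegral_subtype_comap measurableSet_Ioi
    (fun s : ℝ => ENNReal.ofReal (s ^ k) * F (s • (θ : EE (k + 1))))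

lemma rot_det {d : ℕ} (ρ : EE d ≃ₗᵢ[ℝ] EE d) : |LinearMap.det (ρ.toLinearEquiv : EE d →ₗ[ℝ] EE d)| = 1 := by
  have h0 : LinearMap.det (ρ.toLinearEquiv : EE d →ₗ[ℝ] EE d) ≠ 0 := (LinearEquiv.isUnit_det' ρ.toLinearEquiv).ne_zero
  have h := lintegral_affine (volume : Measure (EE d)) _ h0 0
    (F := (ball (0 : EE d) 1).indicator 1) (measurable_one.indicator measurableSet_ball)
  have h2 : ∀ x, (ball (0 : EE d) 1).indicator (1 : EE d → ℝ≥0∞) 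
      ((ρ.toLinearEquiv : EE d →ₗ[ℝ] EE d) x + 0) = (ball (0 : EE d) 1).indicator 1 x := by
    intro x
    classical
    simp [Set.indicator_apply]
  simp_rw [h2] at h
  rw [lintegral_indicator_one measurableSet_ball] at h
  have h3 : ENNReal.ofReal |LinearMap.det (ρ.toLinearEquiv : EE d →ₗ[ℝ] EE d)| = 1 := by
    rw [← ENNReal.mul_left_inj (measure_ball_pos volume (0 : EE d) one_pos).ne'
      measure_ball_lt_top.ne, h, one_mul]
  simpa using h3

lemma DD_rot {d : ℕ} (ρ : EE d ≃ₗᵢ[ℝ] EE d) {g : EE d → ℝ≥0∞} (hg : Measurable g) :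
    DD (fun x => g (ρ x)) = DD g := by
  have h := DD_affine (ρ.toLinearEquiv : EE d →ₗ[ℝ] EE d) (LinearEquiv.isUnit_det' ρ.toLinearEquiv).ne_zero 0 hg
  rw [rot_det] at h
  simpa using h

lemma lintegral_rot {d : ℕ} (ρ : EE d ≃ₗᵢ[ℝ] EE d) (g : EE d → ℝ≥0∞) :
    ∫⁻ x, g (ρ x) = ∫⁻ x, g x :=
  ρ.measurePreserving.lintegral_comp_emb ρ.toHomeomorph.measurableEmbedding g

lemma Adm.rot {d : ℕ} {R r : ℝ} {g : EE d → ℝ≥0∞} (hg : Adm R r g) (ρ : EE d ≃ₗᵢ[ℝ] EE d) :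
    Adm R r (fun x => g (ρ x)) where
  meas := hg.meas.comp ρ.continuous.measurable
  le_one := fun x => hg.le_one _
  supp := fun x hx => hg.supp _ (by simpa using hx)
  mass := by rw [lintegral_rot, hg.mass]

lemma pf_rot {d : ℕ} (r : ℝ) (g : EE d → ℝ≥0∞) (ρ : EE d ≃ₗᵢ[ℝ] EE d) (x : EE d) :
    pf r (fun x => g (ρ x)) x = pf r g (ρ x) := by
  classical
  simp [pf, Set.indicator_apply]

lemma qf_rot {d : ℕ} (r : ℝ) (g : EE d → ℝ≥0∞) (ρ : EE d ≃ₗᵢ[ℝ] EE d) (x : EE d) :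
    qf r (fun x => g (ρ x)) x = qf r g (ρ x) := by
  classical
  simp [qf, Set.indicator_apply]

lemma err_rot {d : ℕ} (r : ℝ) (g : EE d → ℝ≥0∞) (ρ : EE d ≃ₗᵢ[ℝ] EE d) :
    err r (fun x => g (ρ x)) = err r g := by
  unfold err
  simp_rw [pf_rot]
  exact lintegral_rot ρ _

/-- The interaction in direction `u`. -/
def II {d : ℕ} (r : ℝ) (g : EE d → ℝ≥0∞) (u : EE d) : ℝ≥0∞ :=
  ∫⁻ x, pf r g x * ∫⁻ s : ℝ, qf r g (x + s • u)

lemma II_rot {d : ℕ} (r : ℝ) (g : EE d → ℝ≥0∞) (ρ : EE d ≃ₗᵢ[ℝ] EE d) (u : EE d) :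
    II r (fun x => g (ρ x)) u = II r g (ρ u) := by
  unfold II
  simp_rw [pf_rot, qf_rot]
  rw [← lintegral_rot ρ (fun x => pf r g x * ∫⁻ s : ℝ, qf r g (x + s • ρ u))]
  simp

lemma sym_step {k : ℕ} {g : EE (k + 1) → ℝ≥0∞} {R r : ℝ} (hR0 : 0 < R) (hr : 0 < r) (hrR : r ≤ R)
    (hg : Adm R r g) (u : EE (k + 1)) (hu : ‖u‖ = 1) :
    ∃ g' : EE (k + 1) → ℝ≥0∞, Adm R r g' ∧ DD g' ≤ DD g ∧
      ENNReal.ofReal (2 * R) * err r g' + II r g u ≤ ENNReal.ofReal (2 * R) * err r g := by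
  set e : EE (k + 1) := econs 1 0 with he
  have hen : ‖e‖ = 1 := by
    have := norm_sq_econs (1 : ℝ) (0 : EE k)
    rw [← he] at this
    rw [← sq_eq_sq₀ (norm_nonneg _) zero_le_one, this]; simp
  set ρ : EE (k + 1) ≃ₗᵢ[ℝ] EE (k + 1) := (Submodule.span ℝ {e - u})ᗮ.reflection
  have hρ : ρ e = u := Submodule.reflection_sub (by rw [hen, hu])
  refine ⟨st (fun x => g (ρ x)), (hg.rot ρ).st hR0, ?_, ?_⟩
  · rw [← DD_rot ρ hg.meas]
    exact DD_st_le (hg.rot ρ).meas (hg.rot ρ).le_one R (hg.rot ρ).supp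
  · have := err_st hR0 hr hrR (hg.rot ρ)
    rw [err_rot] at this
    have h2 := II_rot r g ρ e
    rw [hρ] at h2
    rw [← h2]
    exact this

lemma swap_aux {X U : Type*} [MeasurableSpace X] [MeasurableSpace U] (μ : Measure X) (σ : Measure U)
    [SFinite μ] [SFinite σ] {p : X → ℝ≥0∞} (hp : Measurable p) {Q : X → U → ℝ≥0∞}
    (hQ : Measurable (Function.uncurry Q)) {c : ℝ≥0∞} (hc : c ≠ ∞) :
    ∫⁻ x, p x * (c * ∫⁻ u, Q x u ∂σ) ∂μ = c * ∫⁻ u, (∫⁻ x, p x * Q x u ∂μ) ∂σ := by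
  have h1 : ∫⁻ u, (∫⁻ x, p x * Q x u ∂μ) ∂σ = ∫⁻ x, (∫⁻ u, p x * Q x u ∂σ) ∂μ := by
    rw [lintegral_lintegral_swap]
    exact ((hp.comp measurable_snd).mul (hQ.comp measurable_swap)).aemeasurable
  rw [h1, ← lintegral_const_mul' _ _ hc]
  refine lintegral_congr fun x => ?_
  have hm : Measurable (fun u => Q x u) := hQ.comp measurable_prodMk_left
  rw [lintegral_const_mul _ hm, mul_left_comm]

lemma key_aux {k : ℕ} {g : EE (k + 1) → ℝ≥0∞} {R r : ℝ} (hrR : r ≤ R)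
    (hg : Adm R r g) (x : EE (k + 1)) (hx : ‖x‖ ≤ R) :
    ∫⁻ w, qf r g w ≤ ENNReal.ofReal ((2 * R) ^ k) *
      ∫⁻ u, (∫⁻ s : ℝ, qf r g (x + s • (u : EE (k + 1))))
        ∂(volume : Measure (EE (k + 1))).toSphere := by
  have hqm := measurable_qf r hg.meas
  rw [← lintegral_add_left_eq_self _ x, lintegral_polar (by fun_prop),
    ← lintegral_const_mul' _ _ ENNReal.ofReal_ne_top]
  refine lintegral_mono fun u => ?_
  rw [← lintegral_const_mul' _ _ ENNReal.ofReal_ne_top]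
  refine le_trans (lintegral_mono_ae ?_) (setLIntegral_le_lintegral (Set.Ioi 0) _)
  filter_upwards [ae_restrict_mem measurableSet_Ioi] with s hs
  rcases le_or_gt s (2 * R) with h | h
  · refine mul_le_mul' (ENNReal.ofReal_le_ofReal ?_) le_rfl
    exact pow_le_pow_left₀ (le_of_lt hs) h k
  · have : qf r g (x + s • (u : EE (k + 1))) = 0 := by
      refine Set.indicator_of_notMem ?_ _
      rw [mem_ball_zero_iff, not_lt]
      have h1 : ‖s • (u : EE (k + 1))‖ = s := by
        rw [norm_smul, Real.norm_of_nonneg (le_of_lt hs), norm_eq_of_mem_sphere, mul_one]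
      have h2 : ‖s • (u : EE (k + 1))‖ ≤ ‖x + s • (u : EE (k + 1))‖ + ‖x‖ := by
        have := norm_sub_le (x + s • (u : EE (k + 1))) x
        simpa using this
      linarith
    simp [this]

lemma meas_aux {k : ℕ} {q : EE (k + 1) → ℝ≥0∞} (hqm : Measurable q) :
    Measurable (Function.uncurry fun (x : EE (k + 1)) (u : sphere (0 : EE (k + 1)) 1) =>
      ∫⁻ s : ℝ, q (x + s • (u : EE (k + 1)))) :=
  Measurable.lintegral_prod_right'
      (f := fun q' : (EE (k + 1) × sphere (0 : EE (k + 1)) 1) × ℝ =>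
        q (q'.1.1 + q'.2 • (q'.1.2 : EE (k + 1)))) (by fun_prop)

lemma err_sq_le {k : ℕ} {g : EE (k + 1) → ℝ≥0∞} {R r : ℝ} (hrR : r ≤ R)
    (hg : Adm R r g) :
    err r g ^ 2 ≤ ENNReal.ofReal ((2 * R) ^ k) *
      ∫⁻ u, II r g (u : EE (k + 1)) ∂(volume : Measure (EE (k + 1))).toSphere := by
  have hpm := measurable_pf r hg.meas
  have hqm := measurable_qf r hg.meas
  have h2 := swap_aux volume (volume : Measure (EE (k + 1))).toSphere hpm (meas_aux hqm)
    (c := ENNReal.ofReal ((2 * R) ^ k)) ENNReal.ofReal_ne_top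
  simp only [II]
  rw [← h2]
  have h1 : err r g ^ 2 = ∫⁻ x, pf r g x * ∫⁻ w, qf r g w := by
    rw [lintegral_mul_const _ hpm, lintegral_qf hg, sq]; rfl
  rw [h1]
  refine lintegral_mono fun x => ?_
  rcases le_or_gt ‖x‖ R with h | h
  · exact mul_le_mul' le_rfl (key_aux hrR hg x h)
  · have : pf r g x = 0 := by
      refine le_antisymm ?_ bot_le
      rw [← hg.supp x h]
      exact Set.indicator_le_self _ _ _
    simp [this]

lemma exists_dir {k : ℕ} {R : ℝ} (hR0 : 0 < R) :
    ∃ C : ℝ≥0∞, C ≠ ∞ ∧ C ≠ 0 ∧ ∀ (r : ℝ) (g : EE (k + 1) → ℝ≥0∞), r ≤ R → Adm R r g →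
      ∃ u : EE (k + 1), ‖u‖ = 1 ∧ err r g ^ 2 ≤ C * II r g u := by
  set σ := (volume : Measure (EE (k + 1))).toSphere with hσ
  set c := ENNReal.ofReal ((2 * R) ^ k)
  have hc0 : c ≠ 0 := by simp only [c, ne_eq, ENNReal.ofReal_eq_zero, not_le]; positivity
  have hct : c ≠ ∞ := ENNReal.ofReal_ne_top
  have hσ0 : σ ≠ 0 := Measure.toSphere_ne_zero _
  have hσu : σ Set.univ ≠ 0 := by simpa using hσ0
  have hσt : σ Set.univ ≠ ∞ := measure_ne_top _ _
  refine ⟨c * σ Set.univ, ENNReal.mul_ne_top hct hσt, mul_ne_zero hc0 hσu, fun r g hrR hg => ?_⟩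
  have hsq := err_sq_le hrR hg
  by_cases hfin : ∫⁻ u, II r g (u : EE (k + 1)) ∂σ = ∞
  · by_contra hcon
    push Not at hcon
    have hle : err r g ^ 2 ≠ ∞ := by
      refine ENNReal.pow_ne_top (ne_top_of_le_ne_top (b := volume (ball (0 : EE (k + 1)) r)) 
        measure_ball_lt_top.ne ?_)
      rw [← hg.mass]
      exact lintegral_mono fun x => Set.indicator_le_self _ _ _
    have hb : ∀ u : sphere (0 : EE (k + 1)) 1, II r g u ≤ err r g ^ 2 / (c * σ Set.univ) := by
      intro u
      rw [ENNReal.le_div_iff_mul_le (Or.inl (mul_ne_zero hc0 hσu)) (Or.inl (ENNReal.mul_ne_top hct hσt)),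
        mul_comm]
      exact (hcon u (by simp)).le
    have : ∫⁻ u, II r g (u : EE (k + 1)) ∂σ ≤ err r g ^ 2 / (c * σ Set.univ) * σ Set.univ := by
      rw [← lintegral_const]; exact lintegral_mono hb
    rw [hfin, top_le_iff] at this
    exact ENNReal.mul_ne_top (ENNReal.div_ne_top hle (mul_ne_zero hc0 hσu)) hσt this
  · obtain ⟨u, hu⟩ := exists_laverage_le hσ0 hfin
    refine ⟨u, by simp, hsq.trans ?_⟩
    rw [mul_assoc]
    refine mul_le_mul' le_rfl ?_
    rw [laverage_eq, ENNReal.div_le_iff_le_mul (Or.inl hσu) (Or.inl hσt)] at hu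
    rw [mul_comm]; exact hu

lemma err_ne_top {d : ℕ} {R r : ℝ} {g : EE d → ℝ≥0∞} (hg : Adm R r g) : err r g ≠ ∞ := by
  refine ne_top_of_le_ne_top (b := volume (ball (0 : EE d) r)) measure_ball_lt_top.ne ?_
  rw [← hg.mass]
  exact lintegral_mono fun x => Set.indicator_le_self _ _ _

lemma exists_small_err {k : ℕ} {g : EE (k + 1) → ℝ≥0∞} {R r : ℝ} (hR0 : 0 < R) (hr : 0 < r)
    (hrR : r ≤ R) (hg : Adm R r g) (ε : ℝ) (hε : 0 < ε) :
    ∃ g' : EE (k + 1) → ℝ≥0∞, Adm R r g' ∧ DD g' ≤ DD g ∧ (err r g').toReal < ε := by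
  obtain ⟨C, hCt, hC0, hC⟩ := exists_dir (k := k) hR0
  set S : Set ℝ := {e | ∃ g' : EE (k + 1) → ℝ≥0∞, Adm R r g' ∧ DD g' ≤ DD g ∧
    e = (err r g').toReal} with hS
  have hne : S.Nonempty := ⟨_, g, hg, le_rfl, rfl⟩
  have hbd : BddBelow S := ⟨0, by rintro _ ⟨g', _, _, rfl⟩; exact ENNReal.toReal_nonneg⟩
  set m := sInf S with hm
  have hm0 : 0 ≤ m := le_csInf hne (by rintro _ ⟨g', _, _, rfl⟩; exact ENNReal.toReal_nonneg)
  have hCr : 0 < C.toReal := ENNReal.toReal_pos hC0 hCt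
  -- step inequality
  have step : ∀ e ∈ S, m + e ^ 2 / (C.toReal * (2 * R)) ≤ e := by
    rintro e ⟨g', hg', hD, rfl⟩
    obtain ⟨u, hu, hle⟩ := hC r g' hrR hg'
    obtain ⟨g2, hg2, hD2, h2⟩ := sym_step hR0 hr hrR hg' u hu
    have hmem : m ≤ (err r g2).toReal := csInf_le hbd ⟨g2, hg2, hD2.trans hD, rfl⟩
    have e1 := err_ne_top hg'
    have e2 := err_ne_top hg2
    have hIt : II r g' u ≠ ∞ := by
      refine ne_top_of_le_ne_top (ENNReal.mul_ne_top ENNReal.ofReal_ne_top e1)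
        (le_trans le_add_self h2)
    have h3 := ENNReal.toReal_mono (ENNReal.mul_ne_top ENNReal.ofReal_ne_top e1) h2
    rw [ENNReal.toReal_add (ENNReal.mul_ne_top ENNReal.ofReal_ne_top e2) hIt, ENNReal.toReal_mul,
      ENNReal.toReal_mul, ENNReal.toReal_ofReal (by positivity)] at h3
    have h4 := ENNReal.toReal_mono (ENNReal.mul_ne_top hCt hIt) hle
    rw [ENNReal.toReal_mul, ENNReal.toReal_pow] at h4
    set a := (err r g').toReal
    set b := (err r g2).toReal
    set I := (II r g' u).toReal
    have h5 : a ^ 2 / (C.toReal * (2 * R)) ≤ I / (2 * R) := by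
      rw [div_le_div_iff₀ (by positivity) (by positivity)]
      nlinarith
    have h6 : b + I / (2 * R) ≤ a := by
      have : b + I / (2 * R) = (2 * R * b + I) / (2 * R) := by field_simp
      rw [this, div_le_iff₀ (by positivity)]
      linarith
    linarith
  have hmz : m ≤ 0 := by
    by_contra hpos
    push Not at hpos
    have hlt : m < m + m ^ 2 / (C.toReal * (2 * R)) := by
      have : 0 < m ^ 2 / (C.toReal * (2 * R)) := by positivity
      linarith
    obtain ⟨e, he, hlt2⟩ := exists_lt_of_csInf_lt hne hlt
    have hme : m ≤ e := csInf_le hbd he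
    have := step e he
    have h7 : m ^ 2 / (C.toReal * (2 * R)) ≤ e ^ 2 / (C.toReal * (2 * R)) := by
      gcongr
    linarith
  obtain ⟨e, ⟨g', h1, h2, rfl⟩, hlt2⟩ := exists_lt_of_csInf_lt hne (lt_of_le_of_lt hmz hε)
  exact ⟨g', h1, h2, hlt2⟩

lemma one_le_prod_add {N : ℕ} (a : Fin N → ℝ≥0∞) (ha : ∀ i, a i ≤ 1) :
    1 ≤ ∏ i, a i + ∑ i, (1 - a i) := by
  induction N with
  | zero => simp
  | succ N ih =>
    rw [Fin.prod_univ_succ, Fin.sum_univ_succ]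
    have h := ih (fun i => a i.succ) (fun i => ha _)
    have h0 : 1 = a 0 + (1 - a 0) := (add_tsub_cancel_of_le (ha 0)).symm
    calc (1 : ℝ≥0∞) = a 0 * 1 + (1 - a 0) := by rw [mul_one]; exact h0
      _ ≤ a 0 * (∏ i : Fin N, a i.succ + ∑ i : Fin N, (1 - a i.succ)) + (1 - a 0) := by gcongr
      _ ≤ a 0 * ∏ i : Fin N, a i.succ + 1 * ∑ i : Fin N, (1 - a i.succ) + (1 - a 0) := by
        rw [mul_add]; gcongr; exact ha 0
      _ = _ := by rw [one_mul]; ring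

lemma DD_ball_le_add {d : ℕ} (r : ℝ) :
    ∃ C : ℝ≥0∞, C ≠ ∞ ∧ ∀ (R : ℝ) (g : EE d → ℝ≥0∞), Adm R r g →
      DD ((ball (0 : EE d) r).indicator 1) ≤ DD g + C * err r g := by
  -- bound for the determinant
  have hcpt : IsCompact (Set.univ.pi fun _ : Fin (d + 1) => closedBall (0 : EE d) r) :=
    isCompact_univ_pi fun _ => isCompact_closedBall _ _
  obtain ⟨M, hM⟩ := (hcpt.image (continuous_simpMat_det (d := d)).abs).isBounded.bddAbove
  have hdet : ∀ Y : Fin (d + 1) → EE d, (∀ i, Y i ∈ ball (0 : EE d) r) → |(simpMat Y).det| ≤ M := by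
    intro Y hY
    refine hM ⟨Y, fun i _ => ball_subset_closedBall (hY i), rfl⟩
  refine ⟨ENNReal.ofReal M * ((d + 1 : ℕ) * volume (ball (0 : EE d) r) ^ d),
    ENNReal.mul_ne_top ENNReal.ofReal_ne_top (ENNReal.mul_ne_top (by simp)
      (ENNReal.pow_ne_top measure_ball_lt_top.ne)), fun R g hg => ?_⟩
  have hgm := hg.meas
  have hqm := measurable_qf r hg.meas
  set χ : EE d → ℝ≥0∞ := (ball (0 : EE d) r).indicator 1 with hχ
  have hχm : Measurable χ := measurable_one.indicator measurableSet_ball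
  -- the factor functions
  set φ : Fin (d + 1) → Fin (d + 1) → EE d → ℝ≥0∞ := fun i j => if j = i then qf r g else χ with hφ
  have hφm : ∀ i j, Measurable (φ i j) := by
    intro i j; by_cases h : j = i <;> simp [hφ, h, hqm, hχm]
  have hpt : ∀ Y : Fin (d + 1) → EE d,
      (∏ i, χ (Y i)) * ENNReal.ofReal |(simpMat Y).det| ≤
      (∏ i, g (Y i)) * ENNReal.ofReal |(simpMat Y).det| +
        ENNReal.ofReal M * ∑ i, ∏ j, φ i j (Y j) := by
    intro Y
    by_cases hY : ∀ i, Y i ∈ ball (0 : EE d) r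
    · have h1 : ∏ i, χ (Y i) = 1 := Finset.prod_eq_one fun i _ => by
        simp only [hχ]; rw [Set.indicator_of_mem (hY i)]; rfl
      have h2 : ∀ i, ∏ j, φ i j (Y j) = 1 - g (Y i) := by
        intro i
        rw [Finset.prod_eq_single i]
        · simp only [hφ, if_true, qf]; rw [Set.indicator_of_mem (hY i)]
        · intro j _ hj
          simp only [hφ, if_neg hj, hχ]; rw [Set.indicator_of_mem (hY j)]; rfl
        · simp
      simp_rw [h1, h2]
      calc 1 * ENNReal.ofReal |(simpMat Y).det| ≤
          (∏ i, g (Y i) + ∑ i, (1 - g (Y i))) * ENNReal.ofReal |(simpMat Y).det| := by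
            gcongr; exact one_le_prod_add (fun i => g (Y i)) (fun i => hg.le_one _)
        _ ≤ _ := by
          rw [add_mul, mul_comm (∑ i, (1 - g (Y i)))]
          gcongr
          exact hdet Y hY
    · push Not at hY
      obtain ⟨i, hi⟩ := hY
      rw [Finset.prod_eq_zero (Finset.mem_univ i) (by
        simp only [hχ]; rw [Set.indicator_of_notMem hi])]
      simp
  have hintg : ∀ i, ∫⁻ Y : Fin (d + 1) → EE d, ∏ j, φ i j (Y j) =
      err r g * volume (ball (0 : EE d) r) ^ d := by
    intro i
    rw [lintegral_pi_prod _ (hφm i), ← Finset.mul_prod_erase _ _ (Finset.mem_univ i)]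
    congr 1
    · simp only [hφ, if_true]; exact lintegral_qf hg
    · rw [Finset.prod_congr rfl (g := fun _ => volume (ball (0 : EE d) r))]
      · simp
      · intro j hj
        simp only [hφ, if_neg (Finset.ne_of_mem_erase hj), hχ]
        exact lintegral_indicator_one measurableSet_ball
  calc DD χ ≤ ∫⁻ Y : Fin (d + 1) → EE d, ((∏ i, g (Y i)) * ENNReal.ofReal |(simpMat Y).det| +
        ENNReal.ofReal M * ∑ i, ∏ j, φ i j (Y j)) := lintegral_mono hpt
    _ = DD g + ENNReal.ofReal M * ∑ i : Fin (d + 1), ∫⁻ Y : Fin (d + 1) → EE d, ∏ j, φ i j (Y j) := by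
      rw [lintegral_add_left (by fun_prop), lintegral_const_mul' _ _ ENNReal.ofReal_ne_top,
        lintegral_finsetSum _ (fun i _ => by fun_prop)]
      rfl
    _ = _ := by
      simp_rw [hintg]
      simp
      ring

lemma DD_ball_le {k : ℕ} {g : EE (k + 1) → ℝ≥0∞} {R r : ℝ} (hR0 : 0 < R) (hr : 0 < r)
    (hrR : r ≤ R) (hg : Adm R r g) : DD ((ball (0 : EE (k + 1)) r).indicator 1) ≤ DD g := by
  obtain ⟨C, hC, h⟩ := DD_ball_le_add (d := k + 1) r
  refine ENNReal.le_of_forall_pos_le_add fun ε hε _ => ?_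
  obtain ⟨g', hg', hD, he⟩ := exists_small_err hR0 hr hrR hg (ε / (C.toReal + 1)) (by positivity)
  refine (h R g' hg').trans (add_le_add hD ?_)
  have e1 : err r g' ≤ ENNReal.ofReal (ε / (C.toReal + 1)) := by
    rw [ENNReal.le_ofReal_iff_toReal_le (err_ne_top hg') (by positivity)]
    exact he.le
  calc C * err r g' ≤ ENNReal.ofReal C.toReal * ENNReal.ofReal (ε / (C.toReal + 1)) := by
        rw [ENNReal.ofReal_toReal hC]; gcongr
    _ = ENNReal.ofReal (C.toReal * (ε / (C.toReal + 1))) := by rw [ENNReal.ofReal_mul (by positivity)]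
    _ ≤ ENNReal.ofReal ε := by
      apply ENNReal.ofReal_le_ofReal
      have : 0 ≤ C.toReal := ENNReal.toReal_nonneg
      rw [mul_div_assoc', div_le_iff₀ (by positivity)]
      nlinarith [ε.2]
    _ = ε := ENNReal.ofReal_coe_nnreal

/-- The unit ball constant. -/
def KK (d : ℕ) : ℝ≥0∞ := DD ((ball (0 : EE d) 1).indicator 1)

/-- The volume of the unit ball. -/
def bv (d : ℕ) : ℝ≥0∞ := volume (ball (0 : EE d) 1)

lemma bv_ne_zero (d : ℕ) : bv d ≠ 0 := (measure_ball_pos volume (0 : EE d) one_pos).ne'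
lemma bv_ne_top (d : ℕ) : bv d ≠ ∞ := measure_ball_lt_top.ne

lemma KK_ne_top (d : ℕ) : KK d ≠ ∞ := by
  have hcpt : IsCompact (Set.univ.pi fun _ : Fin (d + 1) => closedBall (0 : EE d) 1) :=
    isCompact_univ_pi fun _ => isCompact_closedBall _ _
  obtain ⟨M, hM⟩ := (hcpt.image (continuous_simpMat_det (d := d)).abs).isBounded.bddAbove
  have hχm : Measurable ((ball (0 : EE d) 1).indicator (1 : EE d → ℝ≥0∞)) :=
    measurable_one.indicator measurableSet_ball
  refine ne_top_of_le_ne_top (b := bv d ^ (d + 1) * ENNReal.ofReal M)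
    (ENNReal.mul_ne_top (ENNReal.pow_ne_top (bv_ne_top d)) ENNReal.ofReal_ne_top) ?_
  have h1 := lintegral_pi_prod (N := d + 1) (fun _ => (ball (0 : EE d) 1).indicator (1 : EE d → ℝ≥0∞))
    (fun _ => hχm)
  simp only [lintegral_indicator_one measurableSet_ball, Finset.prod_const, Finset.card_univ,
    Fintype.card_fin] at h1
  rw [bv, ← h1, ← lintegral_mul_const _ (by fun_prop)]
  refine lintegral_mono fun Y => ?_
  by_cases hY : ∀ i, Y i ∈ ball (0 : EE d) 1
  · refine mul_le_mul' le_rfl (ENNReal.ofReal_le_ofReal ?_)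
    exact hM ⟨Y, fun i _ => ball_subset_closedBall (hY i), rfl⟩
  · push Not at hY
    obtain ⟨i, hi⟩ := hY
    have : ∏ i, (ball (0 : EE d) 1).indicator (1 : EE d → ℝ≥0∞) (Y i) = 0 :=
      Finset.prod_eq_zero (Finset.mem_univ i) (Set.indicator_of_notMem hi _)
    simp [this]

lemma volume_ball_eq {d : ℕ} {r : ℝ} (hr : 0 < r) :
    volume (ball (0 : EE d) r) = ENNReal.ofReal (r ^ d) * bv d := by
  rw [Measure.addHaar_ball_of_pos _ _ hr]; simp [bv]

lemma DD_ball_scale {d : ℕ} {r : ℝ} (hr : 0 < r) :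
    DD ((ball (0 : EE d) r).indicator 1) = ENNReal.ofReal (r ^ d) ^ (d + 2) * KK d := by
  have hχm : Measurable ((ball (0 : EE d) r).indicator (1 : EE d → ℝ≥0∞)) :=
    measurable_one.indicator measurableSet_ball
  have hdet : LinearMap.det (r • (LinearMap.id : EE d →ₗ[ℝ] EE d)) = r ^ d := by simp
  have h := DD_affine (r • (LinearMap.id : EE d →ₗ[ℝ] EE d)) (by rw [hdet]; positivity) 0 hχm
  rw [← h, hdet, abs_of_pos (by positivity), KK]
  congr 2
  ext x
  classical
  simp only [Set.indicator_apply, LinearMap.smul_apply, LinearMap.id_apply, add_zero,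
    mem_ball_zero_iff, norm_smul, Real.norm_of_nonneg hr.le]
  congr 1
  rw [eq_iff_iff, mul_lt_iff_lt_one_right hr]

lemma DD_lower_bdd {k : ℕ} {g : EE (k + 1) → ℝ≥0∞} (hg : Measurable g) (h1 : ∀ x, g x ≤ 1)
    (R : ℝ) (hR : ∀ x, R < ‖x‖ → g x = 0) :
    KK (k + 1) * (∫⁻ x, g x) ^ (k + 3) ≤ bv (k + 1) ^ (k + 3) * DD g := by
  set V := ∫⁻ x, g x with hV
  have hVt : V ≠ ∞ := by
    refine ne_top_of_le_ne_top (b := volume (closedBall (0 : EE (k + 1)) R))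
      measure_closedBall_lt_top.ne ?_
    rw [← lintegral_indicator_one measurableSet_closedBall]
    refine lintegral_mono fun x => ?_
    by_cases hx : x ∈ closedBall (0 : EE (k + 1)) R
    · rw [Set.indicator_of_mem hx]; exact h1 x
    · rw [mem_closedBall_zero_iff, not_le] at hx
      rw [hR x hx]; exact bot_le
  by_cases hV0 : V = 0
  · simp [hV0]
  set b := bv (k + 1) with hb
  have hb0 : b ≠ 0 := bv_ne_zero _
  have hbt : b ≠ ∞ := bv_ne_top _
  set r : ℝ := ((V / b).toReal) ^ ((1 : ℝ) / (k + 1 : ℕ)) with hr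
  have hq : 0 < (V / b).toReal :=
    ENNReal.toReal_pos (ENNReal.div_ne_zero.2 ⟨hV0, hbt⟩) (ENNReal.div_ne_top hVt hb0)
  have hr0 : 0 < r := Real.rpow_pos_of_pos hq _
  have hrd : ENNReal.ofReal (r ^ (k + 1)) = V / b := by
    rw [hr, ← Real.rpow_natCast, ← Real.rpow_mul hq.le, one_div, inv_mul_cancel₀ (by positivity),
      Real.rpow_one, ENNReal.ofReal_toReal (ENNReal.div_ne_top hVt hb0)]
  have hadm : Adm (max R r) r g := ⟨hg, h1, fun x hx => hR x ((le_max_left _ _).trans_lt hx), by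
    rw [volume_ball_eq hr0, hrd, ENNReal.div_mul_cancel hb0 hbt]⟩
  have h := DD_ball_le (hr0.trans_le (le_max_right R r)) hr0 (le_max_right _ _) hadm
  rw [DD_ball_scale hr0, hrd] at h
  calc KK (k + 1) * V ^ (k + 3) = b ^ (k + 3) * ((V / b) ^ (k + 1 + 2) * KK (k + 1)) := by
        rw [← mul_assoc, ← mul_pow, ENNReal.mul_div_cancel hb0 hbt, mul_comm]
    _ ≤ _ := mul_le_mul' le_rfl h

lemma DD_lower_one {k : ℕ} {g : EE (k + 1) → ℝ≥0∞} (hg : Measurable g) (h1 : ∀ x, g x ≤ 1) :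
    KK (k + 1) * (∫⁻ x, g x) ^ (k + 3) ≤ bv (k + 1) ^ (k + 3) * DD g := by
  set gN : ℕ → EE (k + 1) → ℝ≥0∞ := fun N => (closedBall (0 : EE (k + 1)) N).indicator g with hgN
  have hm : ∀ N, Measurable (gN N) := fun N => hg.indicator measurableSet_closedBall
  have hmono : Monotone gN := by
    intro N M hNM
    exact Set.indicator_le_indicator_of_subset (closedBall_subset_closedBall (by exact_mod_cast hNM))
      (fun _ => bot_le)
  have hsup : ∀ x, ⨆ N, gN N x = g x := by
    intro x
    refine le_antisymm (iSup_le fun N => Set.indicator_le_self _ _ _) ?_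
    obtain ⟨N, hN⟩ := exists_nat_ge ‖x‖
    refine le_trans (le_of_eq ?_) (le_iSup _ N)
    simp only [hgN]
    rw [Set.indicator_of_mem (by simpa using hN)]
  have hlim : Filter.Tendsto (fun N => ∫⁻ x, gN N x) Filter.atTop (nhds (∫⁻ x, g x)) := by
    rw [← lintegral_congr hsup, lintegral_iSup hm hmono]
    refine tendsto_atTop_iSup fun N M hNM => lintegral_mono (hmono hNM)
  have hlim2 : Filter.Tendsto (fun N => KK (k + 1) * (∫⁻ x, gN N x) ^ (k + 3)) Filter.atTop
      (nhds (KK (k + 1) * (∫⁻ x, g x) ^ (k + 3))) :=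
    ENNReal.Tendsto.const_mul (((ENNReal.continuous_pow (k + 3)).tendsto _).comp hlim)
      (Or.inr (KK_ne_top _))
  refine le_of_tendsto' hlim2 fun N => ?_
  refine (DD_lower_bdd (hm N) (fun x => (Set.indicator_le_self _ _ _).trans (h1 x)) N ?_).trans ?_
  · intro x hx
    refine Set.indicator_of_notMem ?_ _
    simpa using hx
  · exact mul_le_mul' le_rfl (DD_mono fun x => Set.indicator_le_self _ _ _)

lemma DD_lower {k : ℕ} {g : EE (k + 1) → ℝ≥0∞} (hg : Measurable g) (ht : essSup g volume ≠ ∞) :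
    KK (k + 1) * ((∫⁻ x, g x) ^ (k + 3) / essSup g volume) ≤ bv (k + 1) ^ (k + 3) * DD g := by
  set M := essSup g volume with hM
  have hae : ∀ᵐ x, g x ≤ M := ENNReal.ae_le_essSup g
  by_cases hM0 : M = 0
  · have : ∫⁻ x, g x = 0 := by
      rw [lintegral_eq_zero_iff hg]
      filter_upwards [hae] with x hx
      rw [hM0] at hx; simpa using hx
    simp [this]
  have hMi0 : M⁻¹ ≠ 0 := ENNReal.inv_ne_zero.2 ht
  have hMit : M⁻¹ ≠ ∞ := ENNReal.inv_ne_top.2 hM0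
  have h := DD_lower_one (g := fun x => min (M⁻¹ * g x) 1) (by fun_prop) (fun x => min_le_right _ _)
  have e1 : ∫⁻ x, min (M⁻¹ * g x) 1 = M⁻¹ * ∫⁻ x, g x := by
    rw [← lintegral_const_mul _ hg]
    refine lintegral_congr_ae ?_
    filter_upwards [hae] with x hx
    refine min_eq_left ?_
    rw [mul_comm, ← div_eq_mul_inv]
    exact ENNReal.div_le_of_le_mul (by rwa [one_mul])
  have e2 : DD (fun x => min (M⁻¹ * g x) 1) ≤ M⁻¹ ^ (k + 2) * DD g := by
    rw [← DD_const_mul hg]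
    exact DD_mono fun x => min_le_left _ _
  rw [e1, mul_pow] at h
  have h2 := h.trans (mul_le_mul' le_rfl e2)
  have hp0 : M⁻¹ ^ (k + 2) ≠ 0 := pow_ne_zero _ hMi0
  have hpt : M⁻¹ ^ (k + 2) ≠ ∞ := ENNReal.pow_ne_top hMit
  rw [← ENNReal.mul_le_mul_iff_right hp0 hpt]
  calc _ = KK (k + 1) * (M⁻¹ ^ (k + 3) * (∫⁻ x, g x) ^ (k + 3)) := by
        rw [div_eq_mul_inv]; ring
    _ ≤ _ := h2
    _ = _ := by ring

/-- Restriction of `F` to a graph hyperplane. -/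
def gr {d : ℕ} (F : EE (d + 1) → ℝ≥0∞) (v : EE (d + 1)) : EE d → ℝ≥0∞ :=
  fun y => F (econs (inner ℝ (econs 1 y) v) y)

lemma simpMat_std {d : ℕ} : ∃ Z : Fin (d + 1) → EE d, (simpMat Z).det ≠ 0 := by
  refine ⟨Fin.cons 0 (fun i => EuclideanSpace.single i 1), ?_⟩
  rw [Matrix.det_of_isLowerTriangular]
  · refine Finset.prod_ne_zero_iff.2 fun i _ => ?_
    refine Fin.cases ?_ (fun i => ?_) i <;> simp [simpMat]
  · intro i j hij
    have hij' : i < j := hij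
    revert hij'
    refine Fin.cases ?_ (fun j => ?_) j
    · intro h; simp at h
    · refine Fin.cases ?_ (fun i => ?_) i
      · intro _; simp [simpMat]
      · intro h
        have : i ≠ j := by rintro rfl; simp at h
        simp [simpMat, this.symm]

lemma simpMat_null {d : ℕ} :
    volume {Y : Fin (d + 1) → EE d | (simpMat Y).det = 0} = 0 := by
  obtain ⟨Z, hZ⟩ := simpMat_std (d := d)
  set S := {Y : Fin (d + 1) → EE d | (simpMat Y).det = 0} with hS
  have hSm : MeasurableSet S := measurable_simpMat_det (measurableSet_singleton 0)
  set χ : (Fin (d + 1) → EE d) → ℝ≥0∞ := S.indicator 1 with hχ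
  have hχm : Measurable χ := measurable_one.indicator hSm
  have h0 : ∀ Y : Fin (d + 1) → EE d, ∫⁻ r : ℝ, χ (r • Y + Z) = 0 := by
    intro Y
    set N : Matrix (Fin (d + 1)) (Fin (d + 1)) ℝ := Matrix.of fun i j => econs 0 (Y i) j with hN
    have hmat : ∀ r : ℝ, simpMat (r • Y + Z) = r • N + simpMat Z := by
      intro r; ext i j
      refine Fin.cases ?_ (fun j => ?_) j <;> simp [simpMat, hN]
    set p : Polynomial ℝ := ((Polynomial.X : Polynomial ℝ) • N.map Polynomial.C + (simpMat Z).map Polynomial.C).det with hp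
    have hev : ∀ r : ℝ, p.eval r = (simpMat (r • Y + Z)).det := by
      intro r
      rw [hmat, hp, ← Polynomial.coe_evalRingHom, RingHom.map_det]
      congr 1
      ext i j
      simp
      ring
    have hp0 : p ≠ 0 := by
      intro h
      have := Polynomial.coeff_det_X_add_C_zero N (simpMat Z)
      rw [← hp, h] at this
      exact hZ this.symm
    have hfin : {r : ℝ | p.IsRoot r}.Finite := Polynomial.finite_setOfPred_isRoot hp0
    have : (fun r : ℝ => χ (r • Y + Z)) =ᵐ[volume] 0 := by
      rw [Filter.EventuallyEq, ae_iff]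
      refine measure_mono_null ?_ (hfin.measure_zero volume)
      intro r hr
      simp only [Set.mem_ofPred_eq, hχ] at hr ⊢
      have hmem : r • Y + Z ∈ S := by
        by_contra hc
        exact hr (Set.indicator_of_notMem hc _)
      rw [Polynomial.IsRoot, hev]
      exact hmem
    rw [lintegral_congr_ae this]; simp
  have h1 : ∫⁻ r : ℝ, ∫⁻ Y : Fin (d + 1) → EE d, χ (r • Y + Z) = 0 := by
    rw [lintegral_lintegral_swap]
    · simp [h0]
    · exact (hχm.comp (by fun_prop : Measurable fun q : ℝ × (Fin (d + 1) → EE d) => q.1 • q.2 + Z)).aemeasurable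
  rw [lintegral_eq_zero_iff] at h1
  swap
  · exact Measurable.lintegral_prod_right'
      (f := fun q : ℝ × (Fin (d + 1) → EE d) => χ (q.1 • q.2 + Z)) (by fun_prop)
  have h2 : ∀ᵐ r : ℝ, r ≠ 0 := by
    rw [ae_iff]; simp
  obtain ⟨r, hr1, hr2⟩ := (h1.and h2).exists
  have hdet : LinearMap.det (r • (LinearMap.id : (Fin (d + 1) → EE d) →ₗ[ℝ] (Fin (d + 1) → EE d))) ≠ 0 := by
    rw [LinearMap.det_smul]; simp [hr2]
  have h3 := lintegral_affine volume _ hdet Z hχm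
  simp only [LinearMap.smul_apply, LinearMap.id_apply] at h3
  simp only [Pi.zero_apply] at hr1
  rw [hr1, mul_zero, hχ, lintegral_indicator_one hSm] at h3
  exact h3.symm

lemma mulVec_simpMat {d : ℕ} (Y : Fin (d + 1) → EE d) (v : EE (d + 1)) (i : Fin (d + 1)) :
    Matrix.toLin' (simpMat Y) (fun j => v j) i = inner ℝ (econs 1 (Y i)) v := by
  simp [simpMat, Matrix.mulVec, dotProduct, PiLp.inner_apply, mul_comm]

lemma heights {d : ℕ} (Y : Fin (d + 1) → EE d) (hY : (simpMat Y).det ≠ 0)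
    {G : (Fin (d + 1) → ℝ) → ℝ≥0∞} (hG : Measurable G) :
    ∫⁻ h, G h = ENNReal.ofReal |(simpMat Y).det| *
      ∫⁻ v : EE (d + 1), G (fun i => inner ℝ (econs 1 (Y i)) v) := by
  have hdet : LinearMap.det (Matrix.toLin' (simpMat Y)) = (simpMat Y).det := LinearMap.det_toLin' _
  have h := lintegral_affine (volume : Measure (Fin (d + 1) → ℝ)) (Matrix.toLin' (simpMat Y))
    (by rwa [hdet]) 0 hG
  rw [← h, hdet]
  congr 1
  simp only [add_zero]
  rw [← (PiLp.volume_preserving_ofLp (Fin (d + 1))).lintegral_comp_emb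
    (MeasurableEquiv.toLp 2 (Fin (d + 1) → ℝ)).symm.measurableEmbedding]
  refine lintegral_congr fun v => ?_
  refine congrArg G (funext fun i => ?_)
  exact mulVec_simpMat Y v i

lemma measurable_gr_joint {d : ℕ} {F : EE (d + 1) → ℝ≥0∞} (hF : Measurable F) :
    Measurable fun q : EE (d + 1) × EE d => gr F q.1 q.2 := by
  unfold gr; fun_prop

lemma blaschke {d : ℕ} {F : EE (d + 1) → ℝ≥0∞} (hF : Measurable F) :
    (∫⁻ x, F x) ^ (d + 1) = ∫⁻ v : EE (d + 1), DD (gr F v) := by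
  have h1 := lintegral_pi_prod (N := d + 1) (fun _ => F) (fun _ => hF)
  simp only [Finset.prod_const, Finset.card_univ, Fintype.card_fin] at h1
  rw [← h1, lintegral_pi_econs (by fun_prop)]
  unfold DD
  conv_rhs => rw [lintegral_lintegral_swap (by
    unfold gr
    refine Measurable.aemeasurable ?_
    refine Measurable.mul ?_ ?_
    · fun_prop
    · exact (ENNReal.measurable_ofReal.comp (measurable_simpMat_det.comp measurable_snd).abs))]
  refine lintegral_congr_ae ?_
  have hae : ∀ᵐ Y : Fin (d + 1) → EE d, (simpMat Y).det ≠ 0 := by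
    rw [ae_iff]; simpa using simpMat_null (d := d)
  filter_upwards [hae] with Y hY
  rw [heights Y hY (by fun_prop), lintegral_mul_const' _ _ ENNReal.ofReal_ne_top, mul_comm]
  rfl

lemma essSup_congr_null {X Y : Type*} [MeasurableSpace X] [MeasurableSpace Y] {μ : Measure X}
    {ν : Measure Y} {f : X → ℝ≥0∞} {g : Y → ℝ≥0∞}
    (h : ∀ a, μ {x | a < f x} = 0 ↔ ν {y | a < g y} = 0) : essSup f μ = essSup g ν := by
  rw [essSup_eq_sInf, essSup_eq_sInf]
  congr 1
  ext a
  exact h a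

lemma lt_essSup_iff {X : Type*} [MeasurableSpace X] {μ : Measure X} {f : X → ℝ≥0∞} {a : ℝ≥0∞} :
    a < essSup f μ ↔ μ {x | a < f x} ≠ 0 := by
  rw [← not_le, not_iff_comm, not_ne_iff]
  constructor
  · intro h
    refine essSup_le_of_ae_le a ?_
    rw [Filter.EventuallyLE, ae_iff]
    simpa using h
  · intro h
    refine measure_mono_null ?_ (meas_essSup_lt (f := f) (μ := μ))
    intro x hx
    exact lt_of_le_of_lt h hx

lemma measurable_essSup {X Y : Type*} [MeasurableSpace X] [MeasurableSpace Y] (ν : Measure Y)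
    [SFinite ν] {G : X × Y → ℝ≥0∞} (hG : Measurable G) :
    Measurable fun x => essSup (fun y => G (x, y)) ν := by
  refine measurable_of_Ioi fun a => ?_
  have : (fun x => essSup (fun y => G (x, y)) ν) ⁻¹' Set.Ioi a =
      (fun x => ν (Prod.mk x ⁻¹' (G ⁻¹' Set.Ioi a))) ⁻¹' {0}ᶜ := by
    ext x
    simp only [Set.mem_preimage, Set.mem_Ioi, lt_essSup_iff]
    rfl
  rw [this]
  exact measurable_measure_prodMk_left (hG measurableSet_Ioi) (measurableSet_singleton 0).compl

/-- The graph functional. -/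
def HH {d : ℕ} (F : EE (d + 1) → ℝ≥0∞) (v : EE (d + 1)) : ℝ≥0∞ :=
  (∫⁻ y, gr F v y) ^ (d + 2) / essSup (gr F v) volume

lemma measurable_HH {d : ℕ} {F : EE (d + 1) → ℝ≥0∞} (hF : Measurable F) : Measurable (HH F) := by
  have h := measurable_gr_joint hF
  have h1 : Measurable fun v : EE (d + 1) => ∫⁻ y, gr F v y :=
    Measurable.lintegral_prod_right' (f := fun q : EE (d + 1) × EE d => gr F q.1 q.2) h
  have h2 : Measurable fun v : EE (d + 1) => essSup (gr F v) volume :=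
    measurable_essSup volume (G := fun q : EE (d + 1) × EE d => gr F q.1 q.2) h
  unfold HH
  exact (h1.pow_const _).div h2

lemma lintegral_scale {c : ℝ} (hc : c ≠ 0) (G : ℝ → ℝ≥0∞) :
    ENNReal.ofReal |c| * ∫⁻ b, G (c * b) = ∫⁻ t, G t := by
  conv_rhs => rw [← Real.smul_map_volume_mul_left hc]
  rw [lintegral_smul_measure, smul_eq_mul]
  congr 1
  exact ((Homeomorph.mulLeft₀ c hc).measurableEmbedding.lintegral_map G).symm

lemma null_affine {d : ℕ} (A : EE d →ₗ[ℝ] EE d) (hA : LinearMap.det A ≠ 0) (c : EE d) {S : Set (EE d)}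
    (hS : MeasurableSet S) : volume {y | A y + c ∈ S} = 0 ↔ volume S = 0 := by
  have h := lintegral_affine volume A hA c (F := S.indicator 1) (measurable_one.indicator hS)
  have hAm : Measurable A := A.continuous_of_finiteDimensional.measurable
  have hm : Measurable fun y => A y + c := by fun_prop
  have e : ∀ y, S.indicator (1 : EE d → ℝ≥0∞) (A y + c) = ((fun y => A y + c) ⁻¹' S).indicator 1 y := by
    intro y; rfl
  simp_rw [e] at h
  rw [lintegral_indicator_one hS, lintegral_indicator_one (hm hS)] at h
  rw [← h, mul_eq_zero]
  have : ENNReal.ofReal |LinearMap.det A| ≠ 0 := by simpa using hA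
  simp only [this, false_or]
  rfl

lemma exists_iota {d : ℕ} (θ : EE (d + 1)) (hθ : θ ≠ 0) :
    Nonempty (EE d ≃ₗᵢ[ℝ] ((ℝ ∙ θ)ᗮ : Submodule ℝ (EE (d + 1)))) := by
  have : Fact (Module.finrank ℝ (EE (d + 1)) = d + 1) := ⟨by simp⟩
  exact ⟨(OrthonormalBasis.fromOrthogonalSpanSingleton d hθ).repr.symm⟩

lemma lintegral_slices {d : ℕ} (θ : EE (d + 1)) (hθ : ‖θ‖ = 1)
    (ι : EE d ≃ₗᵢ[ℝ] ((ℝ ∙ θ)ᗮ : Submodule ℝ (EE (d + 1)))) {F : EE (d + 1) → ℝ≥0∞}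
    (hF : Measurable F) : ∫⁻ x, F x = ∫⁻ t : ℝ, ∫⁻ w : EE d, F (t • θ + (ι w : EE (d + 1))) := by
  set L : EE (d + 1) →ₗ[ℝ] EE (d + 1) :=
    { toFun := fun x => (x 0) • θ + (ι (etail x) : EE (d + 1))
      map_add' := by
        intro x y
        have : etail (x + y) = etail x + etail y := by ext i; simp
        rw [this, map_add]
        simp only [PiLp.add_apply, add_smul, Submodule.coe_add]
        abel
      map_smul' := by
        intro c x
        have : etail (c • x) = c • etail x := by ext i; simp
        rw [this, map_smul]
        simp [mul_smul] } with hL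
  have hLn : ∀ x, ‖L x‖ = ‖x‖ := by
    intro x
    have horth : inner ℝ ((x 0) • θ) (ι (etail x) : EE (d + 1)) = 0 := by
      rw [inner_smul_left, Submodule.mem_orthogonal_singleton_iff_inner_right.1 (ι (etail x)).2, mul_zero]
    have h1 : ‖L x‖ ^ 2 = ‖x‖ ^ 2 := by
      have h2 := norm_add_sq_eq_norm_sq_add_norm_sq_of_inner_eq_zero _ _ horth
      have h3 := norm_sq_econs (x 0) (etail x)
      rw [econs_etail] at h3
      simp only [hL, LinearMap.coe_mk, AddHom.coe_mk]
      have h4 : ‖(ι (etail x) : EE (d + 1))‖ = ‖etail x‖ := ι.norm_map (etail x)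
      rw [sq, h2, h3, norm_smul, hθ, h4]
      simp [← sq]
    rwa [sq_eq_sq₀ (norm_nonneg _) (norm_nonneg _)] at h1
  set U : EE (d + 1) ≃ₗᵢ[ℝ] EE (d + 1) :=
    LinearIsometry.toLinearIsometryEquiv ⟨L, hLn⟩ rfl with hU
  have hUx : ∀ x, U x = (x 0) • θ + (ι (etail x) : EE (d + 1)) := fun x => rfl
  have hUm : Measurable U := U.continuous.measurable
  rw [← lintegral_rot U, lintegral_econs (by fun_prop)]
  refine lintegral_congr fun t => lintegral_congr fun w => ?_
  rw [hUx]; simp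

lemma gr_slice {d : ℕ} (θ : EE (d + 1)) (hθ : ‖θ‖ = 1) (h0 : θ 0 ≠ 0)
    (ι : EE d ≃ₗᵢ[ℝ] ((ℝ ∙ θ)ᗮ : Submodule ℝ (EE (d + 1)))) :
    ∃ (A : EE d →ₗ[ℝ] EE d) (c : ℝ → EE d), LinearMap.det A ≠ 0 ∧
      ∀ b y, econs (inner ℝ (econs 1 y) (econs b (-(θ 0)⁻¹ • etail θ))) y =
        (θ 0 * b) • θ + (ι (A y + c b) : EE (d + 1)) := by
  set m := -(θ 0)⁻¹ • etail θ with hm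
  have hθe : econs (θ 0) (etail θ) = θ := econs_etail θ
  have hin : ∀ (h : ℝ) (y : EE d), inner ℝ θ (econs h y) = θ 0 * h + inner ℝ (etail θ) y := by
    intro h y
    rw [← inner_econs, hθe]
  have hmy : ∀ y : EE d, θ 0 * inner ℝ y m = - inner ℝ (etail θ) y := by
    intro y
    rw [hm, inner_smul_right, real_inner_comm]
    field_simp
  set A0 : EE d →ₗ[ℝ] ((ℝ ∙ θ)ᗮ : Submodule ℝ (EE (d + 1))) :=
    { toFun := fun y => ⟨econs (inner ℝ y m) y, by
        rw [Submodule.mem_orthogonal_singleton_iff_inner_right, hin, hmy]; ring⟩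
      map_add' := by
        intro x y
        ext1
        simp only [Submodule.coe_add, inner_add_left, econs_add]
      map_smul' := by
        intro c x
        ext1
        simp only [Submodule.coe_smul, inner_smul_left]
        simp [econs_smul] } with hA0
  set c0 : ℝ → ((ℝ ∙ θ)ᗮ : Submodule ℝ (EE (d + 1))) := fun b => ⟨econs b 0 - (θ 0 * b) • θ, by
    rw [Submodule.mem_orthogonal_singleton_iff_inner_right, inner_sub_right, hin, inner_smul_right,
      real_inner_self_eq_norm_sq, hθ]
    simp⟩ with hc0
  refine ⟨ι.symm.toLinearEquiv.toLinearMap ∘ₗ A0, fun b => ι.symm (c0 b), ?_, ?_⟩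
  · have hinj : Function.Injective (ι.symm.toLinearEquiv.toLinearMap ∘ₗ A0) := by
      intro x y hxy
      have h1 : A0 x = A0 y := ι.symm.injective hxy
      have h2 := congrArg (fun p : ((ℝ ∙ θ)ᗮ : Submodule ℝ (EE (d + 1))) => etail (p : EE (d + 1))) h1
      simpa [hA0] using h2
    exact (LinearEquiv.isUnit_det' (LinearEquiv.ofInjectiveEndo _ hinj)).ne_zero
  · intro b y
    have h1 : ι ((ι.symm.toLinearEquiv.toLinearMap ∘ₗ A0) y + ι.symm (c0 b)) = A0 y + c0 b := by
      rw [map_add, ι.apply_symm_apply]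
      congr 1
      exact ι.apply_symm_apply (A0 y)
    rw [h1, inner_econs]
    have h2 : econs (1 * b + inner ℝ y m) y = econs (inner ℝ y m) y + econs b 0 := by
      rw [← econs_add, add_zero, one_mul, add_comm b]
    rw [h2]
    simp only [hA0, hc0, Submodule.coe_add, LinearMap.coe_mk, AddHom.coe_mk]
    abel

lemma lintegral_gr {d : ℕ} {F : EE (d + 1) → ℝ≥0∞} (hF : Measurable F) (m : EE d) :
    ∫⁻ b, ∫⁻ y, gr F (econs b m) y = ∫⁻ x, F x := by
  rw [lintegral_econs' hF, lintegral_lintegral_swap]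
  · refine lintegral_congr fun y => ?_
    simp only [gr, inner_econs, one_mul]
    exact lintegral_add_right_eq_self (fun b => F (econs b y)) _
  · unfold gr
    exact Measurable.aemeasurable (by fun_prop)

lemma gr_slice_det {d : ℕ} (θ : EE (d + 1)) (hθn : ‖θ‖ = 1) (h0 : θ 0 ≠ 0)
    (ι : EE d ≃ₗᵢ[ℝ] ((ℝ ∙ θ)ᗮ : Submodule ℝ (EE (d + 1)))) :
    ∃ (A : EE d →ₗ[ℝ] EE d) (c : ℝ → EE d), LinearMap.det A ≠ 0 ∧
      ENNReal.ofReal |LinearMap.det A| * ENNReal.ofReal |θ 0| = 1 ∧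
      ∀ (G : EE (d + 1) → ℝ≥0∞) b, gr G (econs b (-(θ 0)⁻¹ • etail θ)) =
      fun y => G ((θ 0 * b) • θ + (ι (A y + c b) : EE (d + 1))) := by
  obtain ⟨A, c, hA, hAc⟩ := gr_slice θ hθn h0 ι
  set m := -(θ 0)⁻¹ • etail θ with hm
  have hιm : Measurable fun w : EE d => (ι w : EE (d + 1)) :=
    (continuous_subtype_val.comp ι.continuous).measurable
  have hgr : ∀ (G : EE (d + 1) → ℝ≥0∞) b, gr G (econs b m) =
      fun y => G ((θ 0 * b) • θ + (ι (A y + c b) : EE (d + 1))) := by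
    intro G b; ext y; simp only [gr, hAc]
  refine ⟨A, c, hA, ?_, hgr⟩
  set D := ENNReal.ofReal |LinearMap.det A| with hD
  have hintg : ∀ (G : EE (d + 1) → ℝ≥0∞), Measurable G → ∀ b,
      D * ∫⁻ y, gr G (econs b m) y = ∫⁻ w : EE d, G ((θ 0 * b) • θ + (ι w : EE (d + 1))) := by
    intro G hG b
    rw [hgr]
    exact lintegral_affine volume A hA (c b)
      (F := fun w => G ((θ 0 * b) • θ + (ι w : EE (d + 1)))) (by fun_prop)
  set χ : EE (d + 1) → ℝ≥0∞ := (ball (0 : EE (d + 1)) 1).indicator 1 with hχ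
  have hχm : Measurable χ := measurable_one.indicator measurableSet_ball
  have e1 := lintegral_gr hχm m
  have e2 := lintegral_slices θ hθn ι hχm
  rw [← lintegral_scale h0] at e2
  simp_rw [← hintg χ hχm] at e2
  rw [lintegral_const_mul' _ _ ENNReal.ofReal_ne_top, e1] at e2
  have e3 : ∫⁻ x, χ x = bv (d + 1) := lintegral_indicator_one measurableSet_ball
  rw [e3] at e2
  rw [← ENNReal.mul_left_inj (bv_ne_zero (d + 1)) (bv_ne_top (d + 1)), one_mul]
  conv_rhs => rw [e2]
  ring

lemma Phi_eq' {d : ℕ} {F : EE (d + 1) → ℝ≥0∞} (hF : Measurable F)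
    (θ : EE (d + 1)) (hθn : ‖θ‖ = 1) (h0 : θ 0 ≠ 0) :
    (∫⁻ t : ℝ, (∫⁻ y : ((ℝ ∙ θ)ᗮ : Submodule ℝ (EE (d + 1))), F (t • θ + (y : EE (d + 1)))) ^ (d + 2) /
      essSup (fun y : ((ℝ ∙ θ)ᗮ : Submodule ℝ (EE (d + 1))) => F (t • θ + (y : EE (d + 1)))) volume) =
    ENNReal.ofReal (|θ 0|⁻¹) ^ (d + 1) * ∫⁻ b, HH F (econs b (-(θ 0)⁻¹ • etail θ)) := by
  have hθ0 : θ ≠ 0 := by rw [← norm_ne_zero_iff, hθn]; exact one_ne_zero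
  obtain ⟨ι⟩ := exists_iota θ hθ0
  obtain ⟨A, c, hA, hdet, hgr⟩ := gr_slice_det θ hθn h0 ι
  set m := -(θ 0)⁻¹ • etail θ with hm
  have hιm : Measurable fun w : EE d => (ι w : EE (d + 1)) :=
    (continuous_subtype_val.comp ι.continuous).measurable
  have hιe : MeasurableEmbedding ι := ι.toHomeomorph.measurableEmbedding
  have hR : ∀ (G : EE (d + 1) → ℝ≥0∞) (t : ℝ),
      ∫⁻ y : ((ℝ ∙ θ)ᗮ : Submodule ℝ (EE (d + 1))), G (t • θ + (y : EE (d + 1))) =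
      ∫⁻ w : EE d, G (t • θ + (ι w : EE (d + 1))) := by
    intro G t
    exact (ι.measurePreserving.lintegral_comp_emb hιe
      (fun y => G (t • θ + (y : EE (d + 1))))).symm
  set D := ENNReal.ofReal |LinearMap.det A| with hD
  have hintg : ∀ b, D * ∫⁻ y, gr F (econs b m) y =
      ∫⁻ y : ((ℝ ∙ θ)ᗮ : Submodule ℝ (EE (d + 1))), F ((θ 0 * b) • θ + (y : EE (d + 1))) := by
    intro b
    rw [hR, hgr]
    exact lintegral_affine volume A hA (c b)
      (F := fun w => F ((θ 0 * b) • θ + (ι w : EE (d + 1)))) (by fun_prop)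
  have hess : ∀ b, essSup (gr F (econs b m)) volume =
      essSup (fun y : ((ℝ ∙ θ)ᗮ : Submodule ℝ (EE (d + 1))) => F ((θ 0 * b) • θ + (y : EE (d + 1)))) volume := by
    intro b
    refine essSup_congr_null fun a => ?_
    rw [hgr]
    have hS : MeasurableSet {w : EE d | a < F ((θ 0 * b) • θ + (ι w : EE (d + 1)))} :=
      measurableSet_lt measurable_const (by fun_prop)
    have h1 := null_affine A hA (c b) hS
    have h2 := ι.measurePreserving.measure_preimage_emb hιe
      {y : ((ℝ ∙ θ)ᗮ : Submodule ℝ (EE (d + 1))) | a < F ((θ 0 * b) • θ + (y : EE (d + 1)))}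
    rw [← h2]
    exact h1
  have hDinv : D = ENNReal.ofReal (|θ 0|⁻¹) := by
    rw [ENNReal.ofReal_inv_of_pos (abs_pos.2 h0)]
    exact ENNReal.eq_inv_of_mul_eq_one_left hdet
  rw [← lintegral_scale h0, ← hDinv]
  have e4 : ∀ b, (∫⁻ y : ((ℝ ∙ θ)ᗮ : Submodule ℝ (EE (d + 1))), F ((θ 0 * b) • θ + (y : EE (d + 1)))) ^ (d + 2) /
      essSup (fun y : ((ℝ ∙ θ)ᗮ : Submodule ℝ (EE (d + 1))) =>
        F ((θ 0 * b) • θ + (y : EE (d + 1)))) volume = D ^ (d + 2) * HH F (econs b m) := by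
    intro b
    rw [← hess, ← hintg, mul_pow, HH, mul_div_assoc]
  rw [lintegral_congr e4, lintegral_const_mul' _ _ (ENNReal.pow_ne_top ENNReal.ofReal_ne_top), ← mul_assoc]
  congr 1
  rw [pow_succ, mul_comm, mul_assoc, hdet, mul_one]

lemma lintegral_pow_Ioo (d : ℕ) {R : ℝ} (hR : 0 ≤ R) :
    ∫⁻ s in Set.Ioo 0 R, ENNReal.ofReal (s ^ d) = ENNReal.ofReal (R ^ (d + 1) / (d + 1)) := by
  rw [Measure.restrict_congr_set Ioo_ae_eq_Ioc, ← ofReal_integral_eq_lintegral_ofReal,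
    ← intervalIntegral.integral_of_le hR, integral_pow]
  · simp
  · have : IntervalIntegrable (fun s : ℝ => s ^ d) volume 0 R := by
      apply Continuous.intervalIntegrable; fun_prop
    exact (intervalIntegrable_iff_integrableOn_Ioc_of_le hR).1 this
  · filter_upwards [ae_restrict_mem measurableSet_Ioc] with s hs
    exact pow_nonneg hs.1.le _

lemma lintegral_neg_inv_smul {d : ℕ} {h : EE d → ℝ≥0∞} (hh : Measurable h) {s : ℝ} (hs : s ≠ 0) :
    ∫⁻ z, h (-s⁻¹ • z) = ENNReal.ofReal (|s| ^ d) * ∫⁻ z, h z := by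
  have hs' : -s⁻¹ ≠ 0 := by simpa using hs
  have hdet : LinearMap.det ((-s⁻¹) • (LinearMap.id : EE d →ₗ[ℝ] EE d)) = (-s⁻¹) ^ d := by
    rw [LinearMap.det_smul]; simp
  have h1 := lintegral_affine volume ((-s⁻¹) • (LinearMap.id : EE d →ₗ[ℝ] EE d))
    (by rw [hdet]; exact pow_ne_zero _ hs') 0 (F := h) hh
  rw [hdet] at h1
  rw [← h1, ← mul_assoc, ← ENNReal.ofReal_mul (by positivity), abs_pow, ← mul_pow, abs_neg, abs_inv,
    mul_inv_cancel₀ (abs_ne_zero.2 hs)]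
  simp

lemma gnomonic (d : ℕ) : ∃ κ : ℝ≥0∞, κ ≠ 0 ∧ κ ≠ ∞ ∧ ∀ h : EE d → ℝ≥0∞, Measurable h →
    (∫⁻ θ : sphere (0 : EE (d + 1)) 1, (ENNReal.ofReal (|(θ : EE (d + 1)) 0|⁻¹) ^ (d + 1) *
      h (-((θ : EE (d + 1)) 0)⁻¹ • etail (θ : EE (d + 1))))
        ∂(volume : Measure (EE (d + 1))).toSphere) = κ * ∫⁻ m, h m := by
  classical
  set I : Set ℝ := {s | s ≠ 0 ∧ |s| < 1} with hI
  have hIm : MeasurableSet I :=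
    (measurableSet_singleton (0 : ℝ)).compl.inter (measurableSet_lt (f := fun s : ℝ => |s|) (g := fun _ => (1:ℝ)) (by fun_prop) measurable_const)
  set k0 : ℝ≥0∞ := ∫⁻ s in I, ENNReal.ofReal (|s| ^ d) with hk0
  set k1 : ℝ≥0∞ := ENNReal.ofReal (1 / ((d : ℝ) + 1)) with hk1
  have hk1p : k1 ≠ 0 := by
    rw [hk1, Ne, ENNReal.ofReal_eq_zero, not_le]; positivity
  have hk0p : k0 ≠ 0 := by
    have h1 : ∫⁻ s in Set.Ioo (0:ℝ) 1, ENNReal.ofReal (s ^ d) ≤ k0 := by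
      calc _ = ∫⁻ s in Set.Ioo (0:ℝ) 1, ENNReal.ofReal (|s| ^ d) := by
            refine setLIntegral_congr_fun measurableSet_Ioo fun s hs => ?_
            simp only [abs_of_pos hs.1]
        _ ≤ k0 := by
            refine lintegral_mono_set ?_
            intro s hs
            exact ⟨hs.1.ne', by rw [abs_of_pos hs.1]; exact hs.2⟩
    rw [lintegral_pow_Ioo d zero_le_one, one_pow] at h1
    exact fun h => hk1p (le_antisymm (h ▸ h1) bot_le)
  have hk0t : k0 ≠ ∞ := by
    have h1 : k0 ≤ ∫⁻ s in I, 1 := by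
      refine setLIntegral_mono measurable_const fun s hs => ?_
      rw [← ENNReal.ofReal_one]
      exact ENNReal.ofReal_le_ofReal (pow_le_one₀ (abs_nonneg _) hs.2.le)
    have h2 : ∫⁻ s in I, 1 ≤ volume (Set.Ioo (-1:ℝ) 1) := by
      rw [setLIntegral_one]
      exact measure_mono fun s hs => abs_lt.1 hs.2
    refine ne_top_of_le_ne_top ?_ (h1.trans h2)
    simp
  refine ⟨k0 / k1, ENNReal.div_ne_zero.2 ⟨hk0p, ENNReal.ofReal_ne_top⟩, ENNReal.div_ne_top hk0t hk1p, ?_⟩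
  intro h hh
  set G : EE (d + 1) → ℝ≥0∞ := fun x => I.indicator 1 (x 0) * h (-(x 0)⁻¹ • etail x) with hG
  have hIi : Measurable (I.indicator (1 : ℝ → ℝ≥0∞)) := measurable_one.indicator hIm
  have hGm : Measurable G := by
    refine Measurable.mul ?_ ?_
    · exact hIi.comp (by fun_prop)
    · fun_prop
  have e1 := lintegral_polar hGm
  have e2 := lintegral_econs hGm
  have e3 : ∀ s : ℝ, ∫⁻ z : EE d, G (econs s z) = I.indicator (fun s => ENNReal.ofReal (|s| ^ d)) s * ∫⁻ m, h m := by
    intro s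
    simp only [hG, econs_zero, etail_econs]
    by_cases hs : s ∈ I
    · simp only [Set.indicator_of_mem hs, Pi.one_apply, one_mul]
      exact lintegral_neg_inv_smul hh hs.1
    · simp [Set.indicator_of_notMem hs]
  simp_rw [e3] at e2
  rw [lintegral_mul_const _ (Measurable.indicator (by fun_prop) hIm), lintegral_indicator hIm] at e2
  have e4 : ∀ θ : sphere (0 : EE (d + 1)) 1,
      ∫⁻ s in Set.Ioi (0:ℝ), ENNReal.ofReal (s^d) * G (s • (θ:EE (d+1))) =
      k1 * (ENNReal.ofReal (|(θ : EE (d + 1)) 0|⁻¹) ^ (d + 1) *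
      h (-((θ : EE (d + 1)) 0)⁻¹ • etail (θ : EE (d + 1)))) := by
    rintro ⟨θ, hθ⟩
    simp only
    by_cases h0 : θ 0 = 0
    · simp [hG, h0, hI]
    · have hp : 0 < |θ 0| := abs_pos.2 h0
      have a1 : ∫⁻ s in Set.Ioi (0:ℝ), ENNReal.ofReal (s^d) * G (s • θ) =
          ∫⁻ s in Set.Ioo (0:ℝ) (|θ 0|⁻¹), ENNReal.ofReal (s^d) * h (-(θ 0)⁻¹ • etail θ) := by
        rw [← lintegral_indicator measurableSet_Ioi, ← lintegral_indicator measurableSet_Ioo]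
        refine lintegral_congr fun s => ?_
        by_cases hs : 0 < s
        · have b1 : -(s * θ 0)⁻¹ • etail (s • θ) = -(θ 0)⁻¹ • etail θ := by
            have : etail (s • θ) = s • etail θ := by ext i; simp
            rw [this, smul_smul]
            congr 1
            field_simp
          rw [Set.indicator_of_mem (Set.mem_Ioi.2 hs)]
          simp only [hG, PiLp.smul_apply, smul_eq_mul, b1]
          have b2 : s * θ 0 ∈ I ↔ s ∈ Set.Ioo (0:ℝ) (|θ 0|⁻¹) := by
            simp only [hI, Set.mem_ofPred_eq, Set.mem_Ioo, abs_mul, abs_of_pos hs, hs, true_and]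
            rw [lt_inv_comm₀ hs hp, ← one_div, lt_div_iff₀ hs, mul_comm |θ 0| s]
            exact ⟨fun h => h.2, fun h => ⟨mul_ne_zero hs.ne' h0, h⟩⟩
          by_cases hs2 : s ∈ Set.Ioo (0:ℝ) (|θ 0|⁻¹)
          · rw [Set.indicator_of_mem (b2.2 hs2), Set.indicator_of_mem hs2]; simp
          · rw [Set.indicator_of_notMem (fun h => hs2 (b2.1 h)), Set.indicator_of_notMem hs2]; simp
        · rw [Set.indicator_of_notMem (by simpa using hs), Set.indicator_of_notMem (fun h => hs h.1)]
      rw [a1, lintegral_mul_const _ (by fun_prop), lintegral_pow_Ioo d (by positivity), ← mul_assoc, hk1,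
        ← ENNReal.ofReal_pow (by positivity), ← ENNReal.ofReal_mul (by positivity)]
      congr 2
      ring
  simp_rw [e4] at e1
  rw [lintegral_const_mul' _ _ ENNReal.ofReal_ne_top, e2] at e1
  rw [ENNReal.div_eq_inv_mul, mul_assoc, e1, ← mul_assoc, ENNReal.inv_mul_cancel hk1p ENNReal.ofReal_ne_top, one_mul]

lemma equator_null (d : ℕ) : ∀ᵐ θ : sphere (0 : EE (d + 1)) 1 ∂(volume : Measure (EE (d + 1))).toSphere,
    (θ : EE (d + 1)) 0 ≠ 0 := by
  classical
  set G : EE (d + 1) → ℝ≥0∞ := fun x => ({0} : Set ℝ).indicator 1 (x 0) with hG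
  have hIi : Measurable (({0} : Set ℝ).indicator (1 : ℝ → ℝ≥0∞)) :=
    measurable_one.indicator (measurableSet_singleton 0)
  have hGm : Measurable G := hIi.comp (by fun_prop)
  have e2 := lintegral_econs' hGm
  have e3 : ∀ z : EE d, ∫⁻ s : ℝ, G (econs s z) = 0 := by
    intro z
    simp only [hG, econs_zero]
    rw [lintegral_indicator_one (measurableSet_singleton 0)]
    simp
  simp_rw [e3] at e2
  rw [lintegral_zero, lintegral_polar hGm] at e2
  have hGs : Measurable fun q : sphere (0 : EE (d + 1)) 1 × ℝ => ENNReal.ofReal (q.2^d) * G (q.2 • (q.1:EE (d+1))) := by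
    fun_prop
  have hm : Measurable fun θ : sphere (0 : EE (d + 1)) 1 =>
      ∫⁻ s in Set.Ioi (0:ℝ), ENNReal.ofReal (s^d) * G (s • (θ:EE (d+1))) :=
    Measurable.lintegral_prod_right' hGs
  rw [lintegral_eq_zero_iff hm] at e2
  filter_upwards [e2] with θ hθ h0
  have : ∫⁻ s in Set.Ioo (0:ℝ) 1, ENNReal.ofReal (s^d) ≤ 0 := by
    rw [← Pi.zero_apply (M := fun _ => ℝ≥0∞) θ, ← hθ]
    refine (lintegral_mono_set Set.Ioo_subset_Ioi_self).trans (lintegral_mono fun s => ?_)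
    simp [hG, h0]
  rw [lintegral_pow_Ioo d zero_le_one] at this
  simp only [nonpos_iff_eq_zero, ENNReal.ofReal_eq_zero] at this
  have : (0:ℝ) < 1 ^ (d + 1) / (d + 1) := by positivity
  linarith

lemma DD_zero' (d : ℕ) : DD (fun _ : EE d => (0 : ℝ≥0∞)) = 0 := by
  have := DD_const_mul (g := fun _ : EE d => (0 : ℝ≥0∞)) measurable_const 0
  simpa using this

lemma DD_ball_sqrt {d : ℕ} (hd : d ≠ 0) (t : ℝ) :
    DD ((ball (0 : EE d) √(1 - t ^ 2)).indicator 1) = ENNReal.ofReal (√(1 - t ^ 2) ^ d) ^ (d + 2) * KK d := by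
  by_cases h : 0 < √(1 - t ^ 2)
  · exact DD_ball_scale h
  · have h0 : √(1 - t ^ 2) = 0 := le_antisymm (not_lt.1 h) (Real.sqrt_nonneg _)
    rw [h0, ball_zero, Set.indicator_empty]
    simp only [zero_pow hd, ENNReal.ofReal_zero, zero_pow (Nat.succ_ne_zero (d + 1)), zero_mul]
    exact DD_zero' d

lemma volume_ball_sqrt {N : ℕ} (hN : N ≠ 0) (t : ℝ) :
    volume (ball (0 : EE N) √(1 - t ^ 2)) = ENNReal.ofReal (√(1 - t ^ 2) ^ N) * bv N := by
  by_cases h : 0 < √(1 - t ^ 2)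
  · exact volume_ball_eq h
  · have h0 : √(1 - t ^ 2) = 0 := le_antisymm (not_lt.1 h) (Real.sqrt_nonneg _)
    rw [h0, ball_zero]
    simp [zero_pow hN]

lemma bv_succ {N : ℕ} (hN : N ≠ 0) :
    bv (N + 1) = (∫⁻ t : ℝ, ENNReal.ofReal (√(1 - t ^ 2) ^ N)) * bv N := by
  classical
  have hχm : Measurable ((ball (0 : EE (N + 1)) 1).indicator (1 : EE (N + 1) → ℝ≥0∞)) :=
    measurable_one.indicator measurableSet_ball
  have e1 : ∫⁻ x, (ball (0 : EE (N + 1)) 1).indicator (1 : EE (N + 1) → ℝ≥0∞) x = bv (N + 1) :=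
    lintegral_indicator_one measurableSet_ball
  rw [← e1, lintegral_econs hχm, ← lintegral_mul_const _ (by fun_prop)]
  refine lintegral_congr fun t => ?_
  rw [← volume_ball_sqrt hN, ← lintegral_indicator_one measurableSet_ball]
  refine lintegral_congr fun z => ?_
  have : econs t z ∈ ball (0 : EE (N + 1)) 1 ↔ z ∈ ball (0 : EE N) √(1 - t ^ 2) := by
    rw [mem_ball_zero_iff, mem_ball_zero_iff, Real.lt_sqrt (norm_nonneg _), ← sq_lt_one_iff₀ (norm_nonneg _),
      norm_sq_econs]
    constructor <;> intro h <;> linarith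
  simp only [Set.indicator_apply, this, Pi.one_apply]

/-- norm of the (non-normalised) normal vector -/
def rr {d : ℕ} (m : EE d) : ℝ := √(1 + ‖m‖ ^ 2)

lemma rr_pos {d : ℕ} (m : EE d) : 0 < rr m := Real.sqrt_pos.2 (by positivity)

lemma rr_sq {d : ℕ} (m : EE d) : rr m ^ 2 = 1 + ‖m‖ ^ 2 := Real.sq_sqrt (by positivity)

@[fun_prop] lemma measurable_rr {d : ℕ} : Measurable (rr (d := d)) := by
  unfold rr; fun_prop

lemma DD_gr_ball {d : ℕ} (hd : d ≠ 0) (m : EE d) :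
    ∃ s : ℝ, s = (rr m)⁻¹ ∧ ∀ b, DD (gr ((ball (0 : EE (d + 1)) 1).indicator 1) (econs b m)) =
      ENNReal.ofReal s ^ (d + 2) * (ENNReal.ofReal (√(1 - (s * b) ^ 2) ^ d) ^ (d + 2) * KK d) := by
  classical
  refine ⟨(rr m)⁻¹, rfl, ?_⟩
  set s := (rr m)⁻¹ with hs
  have hsp : 0 < s := inv_pos.2 (rr_pos m)
  set θ : EE (d + 1) := econs s (-(s • m)) with hθ
  have hθn : ‖θ‖ = 1 := by
    have h1 : ‖θ‖ ^ 2 = 1 := by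
      rw [hθ, norm_sq_econs, norm_neg, norm_smul, mul_pow, Real.norm_eq_abs, sq_abs]
      have := rr_sq m
      have h2 := (rr_pos m).ne'
      have h3 : s ^ 2 * rr m ^ 2 = 1 := by rw [hs]; field_simp
      rw [this] at h3
      linarith
    exact (pow_eq_one_iff_of_nonneg (norm_nonneg _) two_ne_zero).1 h1
  have h00 : θ 0 = s := by simp [hθ]
  have h0 : θ 0 ≠ 0 := by rw [h00]; exact hsp.ne'
  have hm : -(θ 0)⁻¹ • etail θ = m := by
    rw [h00, hθ, etail_econs, smul_neg, neg_smul, neg_neg, smul_smul, inv_mul_cancel₀ hsp.ne', one_smul]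
  have hθ0 : θ ≠ 0 := by rw [← norm_ne_zero_iff, hθn]; exact one_ne_zero
  obtain ⟨ι⟩ := exists_iota θ hθ0
  obtain ⟨A, c, hA, hdet, hgr⟩ := gr_slice_det θ hθn h0 ι
  rw [hm, h00] at hgr
  rw [h00, abs_of_pos hsp] at hdet
  intro b
  rw [hgr]
  have hset : ∀ w : EE d, (ball (0 : EE (d + 1)) 1).indicator (1 : EE (d + 1) → ℝ≥0∞)
      ((s * b) • θ + (ι w : EE (d + 1))) = (ball (0 : EE d) √(1 - (s * b) ^ 2)).indicator 1 w := by
    intro w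
    have : (s * b) • θ + (ι w : EE (d + 1)) ∈ ball (0 : EE (d + 1)) 1 ↔ w ∈ ball (0 : EE d) √(1 - (s * b) ^ 2) := by
      have horth : inner ℝ ((s * b) • θ) (ι w : EE (d + 1)) = 0 := by
        rw [inner_smul_left, Submodule.mem_orthogonal_singleton_iff_inner_right.1 (ι w).2, mul_zero]
      have h2 := norm_add_sq_eq_norm_sq_add_norm_sq_of_inner_eq_zero _ _ horth
      have h4 : ‖(ι w : EE (d + 1))‖ = ‖w‖ := ι.norm_map w
      rw [h4, norm_smul, hθn, mul_one, Real.norm_eq_abs, abs_mul_abs_self] at h2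
      rw [mem_ball_zero_iff, mem_ball_zero_iff, Real.lt_sqrt (norm_nonneg _), ← sq_lt_one_iff₀ (norm_nonneg _),
        sq, h2]
      constructor <;> intro h <;> nlinarith
    simp only [Set.indicator_apply, this, Pi.one_apply]
  simp_rw [hset]
  have hb : Measurable ((ball (0 : EE d) √(1 - (s * b) ^ 2)).indicator (1 : EE d → ℝ≥0∞)) :=
    measurable_one.indicator measurableSet_ball
  have h5 := DD_affine A hA (c b) hb
  rw [DD_ball_sqrt hd] at h5
  rw [← h5, ← mul_assoc, ← mul_pow, mul_comm (ENNReal.ofReal s), hdet, one_pow, one_mul]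

/-- total gnomonic weight -/
def WW (d : ℕ) : ℝ≥0∞ := ∫⁻ m : EE d, ENNReal.ofReal ((rr m)⁻¹) ^ (d + 1)

/-- slicing constant -/
def ββ (d : ℕ) : ℝ≥0∞ := ∫⁻ t : ℝ, ENNReal.ofReal (√(1 - t ^ 2) ^ d) ^ (d + 2)

lemma measurable_DD_gr {d : ℕ} {F : EE (d + 1) → ℝ≥0∞} (hF : Measurable F) :
    Measurable fun v => DD (gr F v) := by
  have h := measurable_gr_joint hF
  have h1 : Measurable fun q : EE (d + 1) × (Fin (d + 1) → EE d) =>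
      (∏ i, gr F q.1 (q.2 i)) * ENNReal.ofReal |(simpMat q.2).det| := by
    refine Measurable.mul ?_ ?_
    · refine Finset.measurable_fun_prod _ fun i _ => ?_
      exact h.comp (g := fun q : EE (d + 1) × EE d => gr F q.1 q.2)
        (f := fun q : EE (d + 1) × (Fin (d + 1) → EE d) => (q.1, q.2 i)) (by fun_prop)
    · have h2 : Measurable fun Y : Fin (d + 1) → EE d => (simpMat Y).det :=
        (continuous_simpMat_det (d := d)).measurable
      exact ((h2.comp measurable_snd).abs).ennreal_ofReal
  exact Measurable.lintegral_prod_right' h1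

lemma ball_equality {d : ℕ} (hd : d ≠ 0) : bv (d + 1) ^ (d + 1) = WW d * (ββ d * KK d) := by
  have hχm : Measurable ((ball (0 : EE (d + 1)) 1).indicator (1 : EE (d + 1) → ℝ≥0∞)) :=
    measurable_one.indicator measurableSet_ball
  have e1 : ∫⁻ x, (ball (0 : EE (d + 1)) 1).indicator (1 : EE (d + 1) → ℝ≥0∞) x = bv (d + 1) :=
    lintegral_indicator_one measurableSet_ball
  have hDm : Measurable fun v => DD (gr ((ball (0 : EE (d + 1)) 1).indicator 1) v) := measurable_DD_gr hχm
  rw [← e1, blaschke hχm, lintegral_econs' hDm, WW, ← lintegral_mul_const _ (by fun_prop)]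
  refine lintegral_congr fun m => ?_
  obtain ⟨s, hs, hb⟩ := DD_gr_ball hd m
  have hsp : 0 < s := hs ▸ inv_pos.2 (rr_pos m)
  rw [← hs]
  simp_rw [hb]
  rw [lintegral_const_mul' _ _ (ENNReal.pow_ne_top ENNReal.ofReal_ne_top), lintegral_mul_const _ (by fun_prop),
    ββ, ← lintegral_scale hsp.ne' (fun t => ENNReal.ofReal (√(1 - t ^ 2) ^ d) ^ (d + 2)), abs_of_pos hsp]
  ring

lemma bv_sq {d : ℕ} (hd : d ≠ 0) : bv (d * (d + 2) + 1) = ββ d * bv (d * (d + 2)) := by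
  rw [bv_succ (by positivity), ββ]
  congr 1
  refine lintegral_congr fun t => ?_
  rw [← ENNReal.ofReal_pow (by positivity), pow_mul]

lemma bv_eq (m : ℕ) (hm : m ≠ 0) : bv m = ENNReal.ofReal (Real.pi ^ ((m : ℝ) / 2) / Real.Gamma ((m : ℝ) / 2 + 1)) := by
  have : Nonempty (Fin m) := ⟨⟨0, Nat.pos_of_ne_zero hm⟩⟩
  unfold bv
  rw [EuclideanSpace.volume_ball]
  simp only [ENNReal.ofReal_one, one_pow, one_mul, Fintype.card_fin]
  rw [Real.sqrt_eq_rpow, ← Real.rpow_natCast, ← Real.rpow_mul Real.pi_pos.le]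
  congr 3
  ring

lemma toSphere_univ_eq {d : ℕ} {κ : ℝ≥0∞} (hκ : ∀ h : EE d → ℝ≥0∞, Measurable h →
    (∫⁻ θ : sphere (0 : EE (d + 1)) 1, (ENNReal.ofReal (|(θ : EE (d + 1)) 0|⁻¹) ^ (d + 1) *
      h (-((θ : EE (d + 1)) 0)⁻¹ • etail (θ : EE (d + 1))))
        ∂(volume : Measure (EE (d + 1))).toSphere) = κ * ∫⁻ m, h m) :
    (volume : Measure (EE (d + 1))).toSphere Set.univ = κ * WW d := by
  rw [WW, ← hκ _ (by fun_prop), ← lintegral_one]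
  refine lintegral_congr_ae ?_
  filter_upwards [equator_null d]
  rintro ⟨θ, hθ⟩ h0
  simp only at h0 ⊢
  have hθn : ‖θ‖ = 1 := by simpa using hθ
  have hp : 0 < |θ 0| := abs_pos.2 h0
  have h1 : rr (-(θ 0)⁻¹ • etail θ) = |θ 0|⁻¹ := by
    rw [rr, ← Real.sqrt_sq (inv_nonneg.2 (abs_nonneg (θ 0)))]
    congr 1
    have := norm_sq_econs (θ 0) (etail θ)
    rw [econs_etail, hθn] at this
    rw [norm_smul, mul_pow, norm_neg, norm_inv, Real.norm_eq_abs, inv_pow, sq_abs]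
    field_simp
    linarith
  rw [h1, ← mul_pow, ← ENNReal.ofReal_mul (by positivity), inv_inv, inv_mul_cancel₀ hp.ne']
  simp

lemma final_core {k : ℕ} {F : EE (k + 2) → ℝ≥0∞} (hF : Measurable F) {C : ℝ≥0∞} (hC : C ≠ ∞)
    (hFC : ∀ x, F x ≤ C) :
    KK (k + 1) * ∫⁻ v, HH F v ≤ bv (k + 1) ^ (k + 3) * (∫⁻ x, F x) ^ (k + 2) := by
  rw [← lintegral_const_mul _ (measurable_HH hF), blaschke hF, ← lintegral_const_mul _ (measurable_DD_gr hF)]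
  refine lintegral_mono fun v => ?_
  have hg : Measurable (gr F v) :=
    (measurable_gr_joint hF).comp (g := fun q : EE (k + 2) × EE (k + 1) => gr F q.1 q.2)
      (f := fun y => (v, y)) (by fun_prop)
  refine DD_lower hg (ne_top_of_le_ne_top hC ?_)
  exact essSup_le_of_ae_le C (Filter.Eventually.of_forall fun y => hFC _)

lemma ennreal_final {κ W K β X I b bn bN bN1 σ : ℝ≥0∞} {p q r : ℕ} (hκ : κ ≠ 0) (hκt : κ ≠ ∞)
    (hσ : σ = κ * W) (hn : bn ^ q = W * (β * K)) (hn0 : bn ≠ 0) (hnt : bn ≠ ∞) (hN : bN1 = β * bN)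
    (hN0 : bN ≠ 0) (hNt : bN ≠ ∞) (hK : K ≠ ∞) (hN1 : bN1 ≠ ∞)
    (h : K * X ≤ b ^ p * I ^ r) : σ⁻¹ * (κ * X) ≤ b ^ p * bN1 / (bn ^ q * bN) * I ^ r := by
  have h0 : W * (β * K) ≠ 0 := hn ▸ pow_ne_zero _ hn0
  have ht : W * (β * K) ≠ ∞ := hn ▸ ENNReal.pow_ne_top hnt
  have hW0 : W ≠ 0 := left_ne_zero_of_mul h0
  have hβK0 : β * K ≠ 0 := right_ne_zero_of_mul h0
  have hβ0 : β ≠ 0 := left_ne_zero_of_mul hβK0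
  have hK0 : K ≠ 0 := right_ne_zero_of_mul hβK0
  have hWt : W ≠ ∞ := fun hh => ht (by rw [hh, ENNReal.top_mul hβK0])
  have hβt : β ≠ ∞ := fun hh => hN1 (by rw [hN, hh, ENNReal.top_mul hN0])
  have e1 : σ⁻¹ * (κ * X) = W⁻¹ * X := by
    rw [hσ, ENNReal.mul_inv (Or.inl hκ) (Or.inl hκt), mul_comm κ⁻¹, mul_assoc, ← mul_assoc κ⁻¹,
      ENNReal.inv_mul_cancel hκ hκt, one_mul]
  have e2 : b ^ p * bN1 / (bn ^ q * bN) = b ^ p * (W⁻¹ * K⁻¹) := by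
    rw [hn, hN, show W * (β * K) * bN = (W * K) * (β * bN) by ring,
      ENNReal.mul_div_mul_right _ _ (mul_ne_zero hβ0 hN0) (ENNReal.mul_ne_top hβt hNt), ENNReal.div_eq_inv_mul,
      ENNReal.mul_inv (Or.inl hW0) (Or.inl hWt), mul_comm]
  rw [e1, e2]
  calc W⁻¹ * X = W⁻¹ * K⁻¹ * (K * X) := by
        rw [mul_assoc, ← mul_assoc K⁻¹, ENNReal.inv_mul_cancel hK0 hK, one_mul]
    _ ≤ W⁻¹ * K⁻¹ * (b ^ p * I ^ r) := mul_le_mul' le_rfl h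
    _ = _ := by ring

lemma sphere_side {d : ℕ} {F : EE (d + 1) → ℝ≥0∞} (hF : Measurable F) {κ : ℝ≥0∞}
    (hκ : ∀ h : EE d → ℝ≥0∞, Measurable h →
    (∫⁻ θ : sphere (0 : EE (d + 1)) 1, (ENNReal.ofReal (|(θ : EE (d + 1)) 0|⁻¹) ^ (d + 1) *
      h (-((θ : EE (d + 1)) 0)⁻¹ • etail (θ : EE (d + 1))))
        ∂(volume : Measure (EE (d + 1))).toSphere) = κ * ∫⁻ m, h m) :
    (∫⁻ θ : sphere (0 : EE (d + 1)) 1, (∫⁻ t : ℝ, Radon (d + 1) F θ t ^ (d + 2) /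
      essSup (fun y : ((ℝ ∙ (θ : EuclideanSpace ℝ (Fin (d + 1))))ᗮ) =>
        F (t • (θ : EuclideanSpace ℝ (Fin (d + 1))) + (y : EuclideanSpace ℝ (Fin (d + 1))))) volume)
        ∂(volume : Measure (EE (d + 1))).toSphere) = κ * ∫⁻ v, HH F v := by
  have hH := measurable_HH hF
  have hm : Measurable fun m : EE d => ∫⁻ b, HH F (econs b m) := by
    have : Measurable fun q : EE d × ℝ => HH F (econs q.2 q.1) := by fun_prop
    exact this.lintegral_prod_right'
  rw [lintegral_econs' hH, ← hκ _ hm]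
  refine lintegral_congr_ae ?_
  filter_upwards [equator_null d] with θ h0
  exact Phi_eq' hF (θ : EE (d + 1)) (norm_eq_of_mem_sphere θ) h0

lemma bv_eq_ballVol (m : ℕ) (hm : m ≠ 0) : bv m = ENNReal.ofReal (ballVol m) := bv_eq m hm

lemma ballVol_pos (m : ℕ) : 0 < ballVol m := by
  unfold ballVol
  have := Real.Gamma_pos_of_pos (s := (m : ℝ) / 2 + 1) (by positivity)
  positivity

/-- The Dann–Paouris–Pivovarov inequality for the hyperplane Radon transform
(case `k = n-1`): here `‖f‖_{θ,t}` is the essential supremum of `f` on the affine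
hyperplane `θ^⊥ + tθ`, and in `ℝ≥0∞` one has `0/0 = 0`, which realizes the convention
that the integrand vanishes when `‖f‖_{θ,t} = 0`. -/
theorem stmt11 (n : ℕ) (hn : 2 ≤ n) (f : EuclideanSpace ℝ (Fin n) → ℝ)
    (hf : Measurable f) (hf0 : ∀ x, 0 ≤ f x) (hfb : ∃ C : ℝ, ∀ x, f x ≤ C)
    (hfi : Integrable f) :
    (∫⁻ θ, ∫⁻ t : ℝ,
        Radon n (fun x => ENNReal.ofReal (f x)) θ t ^ (n + 1) /
          essSup (fun y : ((ℝ ∙ (θ : EuclideanSpace ℝ (Fin n)))ᗮ) =>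
              ENNReal.ofReal (f (t • (θ : EuclideanSpace ℝ (Fin n)) +
                (y : EuclideanSpace ℝ (Fin n))))) volume
        ∂volume ∂(sphMeasure n)) ≤
      ENNReal.ofReal (ballVol (n - 1) ^ (n + 1) * ballVol (n ^ 2) /
          (ballVol n ^ n * ballVol (n ^ 2 - 1))) *
        (∫⁻ x, ENNReal.ofReal (f x)) ^ n := by
  obtain ⟨k, rfl⟩ : ∃ k, n = k + 2 := ⟨n - 2, by omega⟩
  obtain ⟨C, hC⟩ := hfb
  set F : EE (k + 2) → ℝ≥0∞ := fun x => ENNReal.ofReal (f x) with hFdef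
  have hF : Measurable F := hf.ennreal_ofReal
  obtain ⟨κ, hκ0, hκt, hκ⟩ := gnomonic (k + 1)
  have hs := sphere_side hF hκ
  have h1 := final_core hF (C := ENNReal.ofReal C) ENNReal.ofReal_ne_top
    (fun x => ENNReal.ofReal_le_ofReal (hC x))
  have hd : k + 1 ≠ 0 := Nat.succ_ne_zero k
  have hconst : ENNReal.ofReal (ballVol (k + 2 - 1) ^ (k + 2 + 1) * ballVol ((k + 2) ^ 2) /
          (ballVol (k + 2) ^ (k + 2) * ballVol ((k + 2) ^ 2 - 1))) =
      bv (k + 1) ^ (k + 3) * bv ((k + 1) * (k + 1 + 2) + 1) /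
        (bv (k + 1 + 1) ^ (k + 1 + 1) * bv ((k + 1) * (k + 1 + 2))) := by
    have a1 : (k + 2) ^ 2 = (k + 1) * (k + 1 + 2) + 1 := by ring
    have a2 : (k + 2) ^ 2 - 1 = (k + 1) * (k + 1 + 2) := by rw [a1]; rfl
    have a3 : k + 2 - 1 = k + 1 := rfl
    rw [a2, a1, a3]
    have p1 := ballVol_pos (k + 1)
    have p2 := ballVol_pos (k + 2)
    have p3 := ballVol_pos ((k + 1) * (k + 1 + 2) + 1)
    have p4 := ballVol_pos ((k + 1) * (k + 1 + 2))
    rw [bv_eq_ballVol _ hd, bv_eq_ballVol _ (Nat.succ_ne_zero (k + 1)), bv_eq_ballVol _ (Nat.succ_ne_zero _),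
      bv_eq_ballVol ((k + 1) * (k + 1 + 2)) (by positivity), ENNReal.ofReal_div_of_pos (by positivity),
      ENNReal.ofReal_mul (by positivity), ENNReal.ofReal_mul (by positivity),
      ENNReal.ofReal_pow p1.le, ENNReal.ofReal_pow p2.le]
  rw [hconst, sphMeasure, lintegral_smul_measure]
  refine le_trans (le_of_eq ?_) (ennreal_final hκ0 hκt (toSphere_univ_eq hκ) (ball_equality hd) (bv_ne_zero _)
    (bv_ne_top _) (bv_sq hd) (bv_ne_zero _) (bv_ne_top _) (KK_ne_top _) (bv_ne_top _) h1)
  rw [← hs]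
  rfl
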